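/- arXiv:1312.5626 — 2 statements merged into one kernel-verified Lean document; each statement's English description precedes it below -/
import Mathlib

section
/- For every graphon W, every δ > 0, and every integer n ≥ 2, N_□(n,δ;W) ≤ n! · N̂_□(n, δ + ε_n; W), where ε_n = 18/√(log₂ n) + 2·d_□(W̄_n, W); moreover ε_n → 0 as n → ∞. -/
open MeasureTheory Set Filter

noncomputable section

/-- A graphon: a symmetric measurable function `ℝ → ℝ → ℝ` with values in `[0,1]`
(only its values on `[0,1]²` matter). -/
def IsGraphon (W : ℝ → ℝ → ℝ) : Prop :=
  (∀ x y, W x y = W y x) ∧ Measurable (Function.uncurry W) ∧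
    ∀ x y, W x y ∈ Set.Icc (0 : ℝ) 1

/-- The cut norm `‖U‖_□`, the supremum over measurable `S, T ⊆ [0,1]` of
`|∫_{S×T} U|`. -/
def cutNorm (U : ℝ → ℝ → ℝ) : ℝ :=
  sSup { r : ℝ | ∃ S T : Set ℝ, MeasurableSet S ∧ MeasurableSet T ∧
    S ⊆ Set.Icc 0 1 ∧ T ⊆ Set.Icc 0 1 ∧
    r = |∫ p in S ×ˢ T, U p.1 p.2| }

/-- `d_□(W₁, W₂) = ‖W₁ - W₂‖_□`. -/
def dCut (W₁ W₂ : ℝ → ℝ → ℝ) : ℝ := cutNorm (fun x y => W₁ x y - W₂ x y)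

/-- A Lebesgue-measure-preserving map `[0,1] → [0,1]`. -/
def IsMPSelf (σ : ℝ → ℝ) : Prop :=
  MeasureTheory.MeasurePreserving σ
      (MeasureTheory.volume.restrict (Set.Icc (0:ℝ) 1))
      (MeasureTheory.volume.restrict (Set.Icc (0:ℝ) 1)) ∧
    Set.MapsTo σ (Set.Icc (0:ℝ) 1) (Set.Icc (0:ℝ) 1)

/-- The cut distance `δ_□(W₁, W₂)`. -/
def deltaCut (W₁ W₂ : ℝ → ℝ → ℝ) : ℝ :=
  sInf { r : ℝ | ∃ σ₁ σ₂ : ℝ → ℝ, IsMPSelf σ₁ ∧ IsMPSelf σ₂ ∧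
    r = cutNorm (fun x y => W₁ (σ₁ x) (σ₁ y) - W₂ (σ₂ x) (σ₂ y)) }

/-- The binary entropy function `h` (base-2 logarithm; `logb 2 0 = 0` by convention,
so `h 0 = h 1 = 0`). -/
def binEnt (x : ℝ) : ℝ := -x * Real.logb 2 x - (1 - x) * Real.logb 2 (1 - x)

/-- `h̃ x = h (min x (1/2))`. -/
def htilde (x : ℝ) : ℝ := binEnt (min x (1/2))

/-- The entropy `Ent(W) = ∫₀¹∫₀¹ h(W(x,y)) dx dy` of a graphon. -/
def graphonEnt (W : ℝ → ℝ → ℝ) : ℝ :=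
  ∫ x in Set.Icc (0:ℝ) 1, ∫ y in Set.Icc (0:ℝ) 1, binEnt (W x y)

open Classical in
/-- The graphon `W_G` of a simple graph `G` on `{1, …, n}` (vertices as `Fin n`,
vertex `i : Fin n` representing `i+1`): `W_G x y = 1` iff `⌈nx⌉⌈ny⌉ ∈ E(G)`. -/
def graphonOfGraph {n : ℕ} (G : SimpleGraph (Fin n)) : ℝ → ℝ → ℝ := fun x y =>
  if ∃ i j : Fin n, G.Adj i j ∧ ⌈(n : ℝ) * x⌉ = ((i : ℕ) : ℤ) + 1 ∧
      ⌈(n : ℝ) * y⌉ = ((j : ℕ) : ℤ) + 1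
  then 1 else 0

/-- A labelled graph class: a set of graphs on `{1,…,n}` for each `n`. -/
abbrev GraphClass := ∀ n : ℕ, Set (SimpleGraph (Fin n))

/-- A graph class is closed under relabelling by permutations. -/
def IsGraphClass (Q : GraphClass) : Prop :=
  ∀ (n : ℕ) (π : Equiv.Perm (Fin n)) (G : SimpleGraph (Fin n)),
    G ∈ Q n → G.comap ⇑π ∈ Q n

/-- A hereditary graph class: a graph class closed under taking induced subgraphs
(relabelled by the order-preserving bijection). -/
def IsHereditary (Q : GraphClass) : Prop :=
  IsGraphClass Q ∧
    ∀ (m n : ℕ) (f : Fin m → Fin n), StrictMono f →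
      ∀ G ∈ Q n, G.comap f ∈ Q m

/-- `Q̂`: the set of graphons which are limits (in cut distance) of sequences of graphs in
the class `Q` whose orders tend to infinity. -/
def limitSet (Q : GraphClass) : Set (ℝ → ℝ → ℝ) :=
  { W | IsGraphon W ∧
    ∃ (nk : ℕ → ℕ) (Gk : ∀ k, SimpleGraph (Fin (nk k))),
      (∀ k, Gk k ∈ Q (nk k)) ∧ Filter.Tendsto nk Filter.atTop Filter.atTop ∧
      Filter.Tendsto (fun k => deltaCut (graphonOfGraph (Gk k)) W) Filter.atTop (nhds 0) }

/-- `C(n,2) = n(n-1)/2` as a real number. -/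
def choose2 (n : ℕ) : ℝ := (n : ℝ) * ((n : ℝ) - 1) / 2

open Classical in
/-- The step function `E[W | P]` obtained by averaging `W` over the products of the
parts of the partition `P` of `[0,1]`. -/
def condExpPart {k : ℕ} (P : Fin k → Set ℝ) (W : ℝ → ℝ → ℝ) : ℝ → ℝ → ℝ := fun x y =>
  ∑ i : Fin k, ∑ j : Fin k,
    if x ∈ P i ∧ y ∈ P j then ⨍ p in (P i) ×ˢ (P j), W p.1 p.2 else 0

/-- `W̄_n`: the step function of `W` for the partition of `[0,1]` into `n` consecutive
intervals of length `1/n`. -/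
def barStep (n : ℕ) (W : ℝ → ℝ → ℝ) : ℝ → ℝ → ℝ :=
  condExpPart (fun i : Fin n => Set.Ioc (((i : ℕ) : ℝ)/n) ((((i : ℕ) : ℝ) + 1)/n)) W

/-- `N̂_□(n, δ; W)`: the number of graphs `G` on `{1,…,n}` with `d_□(W_G, W) ≤ δ`. -/
def NhatCut (n : ℕ) (δ : ℝ) (W : ℝ → ℝ → ℝ) : ℕ :=
  Nat.card {G : SimpleGraph (Fin n) // dCut (graphonOfGraph G) W ≤ δ}

/-- `N_□(n, δ; W)`: the number of graphs `G` on `{1,…,n}` with `δ_□(W_G, W) ≤ δ`. -/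
def NCut (n : ℕ) (δ : ℝ) (W : ℝ → ℝ → ℝ) : ℕ :=
  Nat.card {G : SimpleGraph (Fin n) // deltaCut (graphonOfGraph G) W ≤ δ}

open Classical in
/-- The induced density `p(F; W)` of a graph `F` on `{1,…,k}` in a graphon `W`. -/
def inducedDensity {k : ℕ} (F : SimpleGraph (Fin k)) (W : ℝ → ℝ → ℝ) : ℝ :=
  ∫ x : Fin k → ℝ in Set.univ.pi (fun _ : Fin k => Set.Icc (0:ℝ) 1),
    ∏ i : Fin k, ∏ j : Fin k,
      if i < j then (if F.Adj i j then W (x i) (x j) else 1 - W (x i) (x j)) else 1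

open Classical in
/-- The randomness support graphon `1_{rand(W)}` of `W`. -/
def randIndicator (W : ℝ → ℝ → ℝ) : ℝ → ℝ → ℝ := fun x y =>
  if 0 < W x y ∧ W x y < 1 then 1 else 0

/-- A kernel `U` is `K_r`-free if `∏_{i<j} U(x_i, x_j) = 0` for a.e. `x ∈ [0,1]^r`. -/
def KFree (r : ℕ) (U : ℝ → ℝ → ℝ) : Prop :=
  ∀ᵐ x ∂(MeasureTheory.volume.restrict (Set.univ.pi fun _ : Fin r => Set.Icc (0:ℝ) 1)),
    (∏ i : Fin r, ∏ j : Fin r, if i < j then U (x i) (x j) else 1) = 0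

open Classical in
/-- The graphon `W^{(r,s)}`: equal to `1/2` off the diagonal blocks, `1` on the first `s`
diagonal blocks `I_i × I_i`, and `0` on the remaining diagonal blocks. -/
def Wrs (r s : ℕ) : ℝ → ℝ → ℝ := fun x y =>
  if ∃ i j : Fin r, i ≠ j ∧ x ∈ Set.Ioc (((i:ℕ):ℝ)/r) ((((i:ℕ):ℝ)+1)/r) ∧
      y ∈ Set.Ioc (((j:ℕ):ℝ)/r) ((((j:ℕ):ℝ)+1)/r)
  then 1/2
  else if ∃ i : Fin r, (i:ℕ) < s ∧ x ∈ Set.Ioc (((i:ℕ):ℝ)/r) ((((i:ℕ):ℝ)+1)/r) ∧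
      y ∈ Set.Ioc (((i:ℕ):ℝ)/r) ((((i:ℕ):ℝ)+1)/r)
  then 1 else 0

/-- `E_r = ⋃_{i ≠ j} I_i × I_j` where `I_i`, `i = 1, …, r`, are the consecutive
intervals of length `1/r` in `[0,1]`. -/
def Er (r : ℕ) : Set (ℝ × ℝ) :=
  ⋃ (i : Fin r) (j : Fin r) (_ : i ≠ j),
    (Set.Ioc (((i:ℕ):ℝ)/r) ((((i:ℕ):ℝ)+1)/r)) ×ˢ (Set.Ioc (((j:ℕ):ℝ)/r) ((((j:ℕ):ℝ)+1)/r))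

/-- `R_r`: the set of graphons equal to `1/2` on `E_r` and `{0,1}`-valued elsewhere
on `[0,1]²`. -/
def Rset (r : ℕ) : Set (ℝ → ℝ → ℝ) :=
  { W | IsGraphon W ∧ (∀ p ∈ Er r, W p.1 p.2 = 1/2) ∧
      ∀ p ∈ ((Set.Icc (0:ℝ) 1) ×ˢ (Set.Icc (0:ℝ) 1)) \ Er r,
        W p.1 p.2 = 0 ∨ W p.1 p.2 = 1 }

/-- A graphon is random-free if it is `{0,1}`-valued a.e. on `[0,1]²`. -/
def IsRandomFree (W : ℝ → ℝ → ℝ) : Prop :=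
  ∀ᵐ p ∂(MeasureTheory.volume.restrict ((Set.Icc (0:ℝ) 1) ×ˢ (Set.Icc (0:ℝ) 1))),
    W (Prod.fst p) (Prod.snd p) = 0 ∨ W (Prod.fst p) (Prod.snd p) = 1



/-- Fractional cut-norm bound for a finite kernel. -/
def CutLE {I : Type} [Fintype I] (M : I → I → ℝ) (c : ℝ) : Prop :=
  ∀ f g : I → ℝ, (∀ i, f i ∈ Set.Icc (0:ℝ) 1) → (∀ i, g i ∈ Set.Icc (0:ℝ) 1) →
    |∑ i, ∑ k, f i * g k * M i k| ≤ c

lemma lin_ext {I : Type} [Fintype I] (h f : I → ℝ) (hf : ∀ i, f i ∈ Set.Icc (0:ℝ) 1) :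
    ∃ S : Finset I, ∑ i, f i * h i ≤ ∑ i ∈ S, h i := by
  classical
  refine ⟨Finset.univ.filter (fun i => 0 < h i), ?_⟩
  rw [Finset.sum_filter]
  apply Finset.sum_le_sum
  intro i _
  have := hf i
  split_ifs with hi
  · nlinarith [this.1, this.2]
  · nlinarith [this.1, this.2]

lemma bil_ext {I : Type} [Fintype I] (M : I → I → ℝ) (f g : I → ℝ)
    (hf : ∀ i, f i ∈ Set.Icc (0:ℝ) 1) (hg : ∀ i, g i ∈ Set.Icc (0:ℝ) 1) :
    ∃ S T : Finset I, ∑ i, ∑ k, f i * g k * M i k ≤ ∑ i ∈ S, ∑ k ∈ T, M i k := by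
  obtain ⟨S, hS⟩ := lin_ext (fun i => ∑ k, g k * M i k) f hf
  obtain ⟨T, hT⟩ := lin_ext (fun k => ∑ i ∈ S, M i k) g hg
  refine ⟨S, T, ?_⟩
  calc ∑ i, ∑ k, f i * g k * M i k = ∑ i, f i * ∑ k, g k * M i k := by
        simp only [Finset.mul_sum, mul_assoc]
    _ ≤ _ := hS
    _ = ∑ k, g k * ∑ i ∈ S, M i k := by
        rw [Finset.sum_comm]; simp only [Finset.mul_sum]
    _ ≤ _ := hT
    _ = _ := Finset.sum_comm

lemma cutLE_of_sets {I : Type} [Fintype I] (M : I → I → ℝ) (c : ℝ)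
    (h : ∀ S T : Finset I, |∑ i ∈ S, ∑ k ∈ T, M i k| ≤ c) : CutLE M c := by
  intro f g hf hg
  rw [abs_le]
  constructor
  · obtain ⟨S, T, hST⟩ := bil_ext (fun i k => - M i k) f g hf hg
    have := (abs_le.1 (h S T)).1
    simp only [mul_neg, Finset.sum_neg_distrib] at hST
    linarith
  · obtain ⟨S, T, hST⟩ := bil_ext M f g hf hg
    have := (abs_le.1 (h S T)).2
    linarith

lemma weak_reg {n : ℕ} (hn : 0 < n) (A : Fin n → Fin n → ℝ) (hA : ∀ i k, A i k ∈ Set.Icc (0:ℝ) 1)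
    (ε : ℝ) (hε : 0 < ε) (m : ℕ) :
    ∃ (L : Type) (_ : Fintype L) (P : Fin n → L) (a : L → L → ℝ),
      (Fintype.card L = 4 ^ m) ∧ (∀ p q, |a p q| ≤ m * ε) ∧
      (CutLE (fun i k => (A i k - a (P i) (P k)) / (n:ℝ)^2) ε ∨
        ∑ i, ∑ k, (A i k - a (P i) (P k))^2 ≤ (n:ℝ)^2 * (1 - m * ε^2)) := by
  have hn0 : (0:ℝ) < n := by exact_mod_cast hn
  induction m with
  | zero =>
    refine ⟨Unit, inferInstance, fun _ => (), fun _ _ => 0, by simp, by simp, Or.inr ?_⟩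
    calc ∑ i, ∑ k, (A i k - 0)^2 ≤ ∑ i : Fin n, ∑ k : Fin n, (1:ℝ) := by
          gcongr with i _ k _
          have := hA i k
          nlinarith [this.1, this.2]
      _ = _ := by simp; ring
  | succ m ih =>
    obtain ⟨L, _, P, a, hc, ha, h⟩ := ih
    classical
    by_cases hcut : CutLE (fun i k => (A i k - a (P i) (P k)) / (n:ℝ)^2) ε
    · refine ⟨L × Bool × Bool, inferInstance, fun i => (P i, true, true),
        fun p q => a p.1 q.1, by simp [hc]; ring, ?_, Or.inl hcut⟩
      intro p q
      refine (ha _ _).trans ?_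
      push_cast; nlinarith
    · have hsum := h.resolve_left hcut
      have : ∃ S T : Finset (Fin n), ε < |∑ i ∈ S, ∑ k ∈ T, (A i k - a (P i) (P k)) / (n:ℝ)^2| := by
        by_contra hcon
        push Not at hcon
        exact hcut (cutLE_of_sets _ _ hcon)
      obtain ⟨S, T, hST⟩ := this
      have key : ∃ s : ℝ, s ^ 2 = ε ^ 2 ∧ |s| = ε ∧
          ε ^ 2 * (n:ℝ)^2 < s * ∑ i ∈ S, ∑ k ∈ T, (A i k - a (P i) (P k)) := by
        have e : ∑ i ∈ S, ∑ k ∈ T, (A i k - a (P i) (P k)) / (n:ℝ)^2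
          = (∑ i ∈ S, ∑ k ∈ T, (A i k - a (P i) (P k))) / (n:ℝ)^2 := by
          simp only [Finset.sum_div]
        rw [e] at hST
        set R := ∑ i ∈ S, ∑ k ∈ T, (A i k - a (P i) (P k))
        rw [abs_div, abs_of_pos (by positivity : (0:ℝ) < (n:ℝ)^2), lt_div_iff₀ (by positivity)] at hST
        rcases le_total 0 R with hR | hR
        · refine ⟨ε, rfl, abs_of_pos hε, ?_⟩
          rw [abs_of_nonneg hR] at hST
          nlinarith
        · refine ⟨-ε, by ring, by rw [abs_neg, abs_of_pos hε], ?_⟩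
          rw [abs_of_nonpos hR] at hST
          nlinarith
      obtain ⟨s, hs2, hsa, hs⟩ := key
      refine ⟨L × Bool × Bool, inferInstance, fun i => (P i, decide (i ∈ S), decide (i ∈ T)),
        fun p q => a p.1 q.1 + if p.2.1 ∧ q.2.2 then s else 0, by simp [hc]; ring, ?_, Or.inr ?_⟩
      · intro p q
        have h1 := ha p.1 q.1
        have : |(if p.2.1 ∧ q.2.2 then s else 0 : ℝ)| ≤ ε := by
          split_ifs
          · exact hsa.le
          · simpa using hε.le
        refine (abs_add_le _ _).trans ?_
        push_cast; linarith
      · simp only [decide_eq_true_eq]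
        have e1 : ∀ i k, (A i k - (a (P i) (P k) + if i ∈ S ∧ k ∈ T then s else 0))^2
            = (A i k - a (P i) (P k))^2 - 2 * s * (if i ∈ S then (if k ∈ T then (A i k - a (P i) (P k)) else 0) else 0)
              + (if i ∈ S then (if k ∈ T then s^2 else 0) else 0) := by
          intro i k
          by_cases h1 : i ∈ S <;> by_cases h2 : k ∈ T <;> simp [h1, h2] <;> ring
        have e2 : ∑ i, ∑ k, (if i ∈ S then (if k ∈ T then (A i k - a (P i) (P k)) else 0) else 0)
           = ∑ i ∈ S, ∑ k ∈ T, (A i k - a (P i) (P k)) := by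
          have : ∀ i, ∑ k, (if i ∈ S then (if k ∈ T then (A i k - a (P i) (P k)) else 0) else 0)
            = if i ∈ S then ∑ k ∈ T, (A i k - a (P i) (P k)) else 0 := by
            intro i
            split_ifs
            · simp [Finset.sum_ite_mem]
            · simp
          simp only [this]
          simp [Finset.sum_ite_mem]
        have e3 : ∑ i : Fin n, ∑ k : Fin n, (if i ∈ S then (if k ∈ T then s^2 else 0) else 0) ≤ (n:ℝ)^2 * s^2 := by
          calc _ ≤ ∑ i : Fin n, ∑ k : Fin n, s^2 := by
                gcongr with i _ k _
                split_ifs <;> first | exact le_refl _ | positivity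
            _ = _ := by simp; ring
        have e4 : ∑ i, ∑ k, (A i k - (a (P i) (P k) + if i ∈ S ∧ k ∈ T then s else 0))^2
            = ∑ i, ∑ k, (A i k - a (P i) (P k))^2
              - 2 * s * ∑ i ∈ S, ∑ k ∈ T, (A i k - a (P i) (P k))
              + ∑ i : Fin n, ∑ k : Fin n, (if i ∈ S then (if k ∈ T then s^2 else 0) else 0) := by
          rw [← e2]
          simp only [e1, Finset.mul_sum]
          simp only [← Finset.sum_sub_distrib, ← Finset.sum_add_distrib]
        rw [e4]
        rw [hs2] at e3 ⊢
        push_cast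
        nlinarith

lemma weak_reg' {n : ℕ} (hn : 0 < n) (A : Fin n → Fin n → ℝ) (hA : ∀ i k, A i k ∈ Set.Icc (0:ℝ) 1)
    (ε : ℝ) (hε : 0 < ε) (m : ℕ) (hm : 1 < m * ε^2) :
    ∃ (L : Type) (_ : Fintype L) (P : Fin n → L) (a : L → L → ℝ),
      (Fintype.card L = 4 ^ m) ∧ (∀ p q, |a p q| ≤ m * ε) ∧
      CutLE (fun i k => (A i k - a (P i) (P k)) / (n:ℝ)^2) ε := by
  obtain ⟨L, i, P, a, h1, h2, h3⟩ := weak_reg hn A hA ε hε m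
  refine ⟨L, i, P, a, h1, h2, h3.resolve_right ?_⟩
  intro h
  have hn0 : (0:ℝ) < n := by exact_mod_cast hn
  have : 0 ≤ ∑ i, ∑ k, (A i k - a (P i) (P k))^2 := by positivity
  have : (n:ℝ)^2 * (1 - m * ε^2) < 0 := by
    apply mul_neg_of_pos_of_neg (by positivity); linarith
  linarith

lemma emb_side {n : ℕ} {L R : Type} [Fintype L] [Fintype R] (P : Fin n → L) (N : L → R → ℕ)
    (h : ∀ p, ∑ q, N p q ≤ Nat.card {i // P i = p}) :
    ∃ e : (Σ p : L, Σ q : R, Fin (N p q)) → Fin n, Function.Injective e ∧ ∀ t, P (e t) = t.1 := by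
  classical
  have : ∀ p, Nonempty ((Σ q : R, Fin (N p q)) ↪ {i // P i = p}) := by
    intro p
    rw [Function.Embedding.nonempty_iff_card_le]
    simpa [Nat.card_eq_fintype_card] using h p
  have f := fun p => (this p).some
  refine ⟨fun t => (f t.1 t.2).1, ?_, fun t => (f t.1 t.2).2⟩
  rintro ⟨p, x⟩ ⟨p', x'⟩ h
  have hp : p = p' := by rw [← (f p x).2, ← (f p' x').2]; exact congrArg P h
  subst hp
  simp only at h
  have := (f p).injective (Subtype.ext h)
  rw [this]

lemma perm_round {n : ℕ} {L R : Type} [Fintype L] [Fintype R] (P : Fin n → L) (Q : Fin n → R)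
    (N : L → R → ℕ)
    (h1 : ∀ p, ∑ q, N p q ≤ Nat.card {i // P i = p})
    (h2 : ∀ q, ∑ p, N p q ≤ Nat.card {i // Q i = q}) :
    ∃ π : Equiv.Perm (Fin n), ∀ p q, N p q ≤ Nat.card {i // P (π i) = p ∧ Q i = q} := by
  classical
  obtain ⟨e1, i1, he1⟩ := emb_side P N h1
  obtain ⟨e2', i2', he2'⟩ := emb_side Q (fun q p => N p q) h2
  let sw : (Σ p : L, Σ q : R, Fin (N p q)) → (Σ q : R, Σ p : L, Fin (N p q)) :=
    fun t => ⟨t.2.1, t.1, t.2.2⟩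
  have hsw : Function.Injective sw := by
    rintro ⟨p, q, x⟩ ⟨p', q', x'⟩ h
    simp only [sw, Sigma.mk.injEq] at h
    obtain ⟨rfl, h⟩ := h
    rw [heq_iff_eq, Sigma.mk.injEq] at h
    obtain ⟨rfl, h⟩ := h
    rw [heq_iff_eq] at h
    rw [h]
  set e2 := e2' ∘ sw with he2
  have i2 : Function.Injective e2 := i2'.comp hsw
  let E : {x // x ∈ Set.range e2} ≃ {x // x ∈ Set.range e1} :=
    (Equiv.ofInjective e2 i2).symm.trans (Equiv.ofInjective e1 i1)
  refine ⟨E.extendSubtype, ?_⟩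
  have hE : ∀ t, E.extendSubtype (e2 t) = e1 t := by
    intro t
    rw [Equiv.extendSubtype_apply_of_mem E (e2 t) ⟨t, rfl⟩]
    simp only [E, Equiv.trans_apply]
    have : (⟨e2 t, ⟨t, rfl⟩⟩ : {x // x ∈ Set.range e2}) = Equiv.ofInjective e2 i2 t := rfl
    rw [this, Equiv.symm_apply_apply]
    rfl
  intro p q
  rw [Nat.card_eq_fintype_card]
  calc N p q = Fintype.card (Fin (N p q)) := by simp
    _ ≤ _ := by
      refine Fintype.card_le_of_injective
        (fun x => ⟨e2 ⟨p, q, x⟩, ?_, ?_⟩) ?_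
      · rw [hE, he1]
      · exact he2' _
      · intro x y hxy
        have := i2 (Subtype.mk.inj hxy)
        simpa using this


open Classical in
/-- Sum of `f` over the fibre of `φ` above `u`. -/
def fibS {I U : Type} [Fintype I] (φ : I → U) (f : I → ℝ) (u : U) : ℝ :=
  ∑ i, if φ i = u then f i else 0

lemma fibS_group {I U : Type} [Fintype I] [Fintype U] (φ : I → U) (f : I → ℝ) (h : U → ℝ) :
    ∑ i, f i * h (φ i) = ∑ u, fibS φ f u * h u := by
  classical
  simp only [fibS, Finset.sum_mul]
  rw [Finset.sum_comm]
  simp [ite_mul]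

lemma fibS_sum {I U : Type} [Fintype I] [Fintype U] (φ : I → U) (f : I → ℝ) :
    ∑ u, fibS φ f u = ∑ i, f i := by
  have := fibS_group φ f (fun _ => 1)
  simpa using this.symm

lemma fibS_group2 {I U : Type} [Fintype I] [Fintype U] (φ : I → U) (f g : I → ℝ) (D : U → U → ℝ) :
    ∑ i, ∑ k, f i * g k * D (φ i) (φ k) = ∑ u, ∑ v, fibS φ f u * fibS φ g v * D u v := by
  have h1 : ∀ i, ∑ k, f i * g k * D (φ i) (φ k) = f i * ∑ v, fibS φ g v * D (φ i) v := by
    intro i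
    rw [← fibS_group φ g (fun v => D (φ i) v), Finset.mul_sum]
    simp only [mul_assoc]
  simp only [h1]
  rw [fibS_group φ f (fun u => ∑ v, fibS φ g v * D u v)]
  simp only [Finset.mul_sum, mul_assoc]

lemma fibS_nonneg {I U : Type} [Fintype I] (φ : I → U) (f : I → ℝ) (hf : ∀ i, 0 ≤ f i) (u : U) :
    0 ≤ fibS φ f u := by
  apply Finset.sum_nonneg
  intro i _
  split_ifs
  · exact hf i
  · exact le_refl _

lemma fibS_mono {I U : Type} [Fintype I] (φ : I → U) (f g : I → ℝ) (hf : ∀ i, f i ≤ g i) (u : U) :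
    fibS φ f u ≤ fibS φ g u := by
  apply Finset.sum_le_sum
  intro i _
  split_ifs
  · exact hf i
  · exact le_refl _

lemma fibS_comp {I U : Type} [Fintype I] (φ : I → U) (w : I → ℝ) (F : U → ℝ) (u : U) :
    fibS φ (fun i => w i * F (φ i)) u = F u * fibS φ w u := by
  classical
  simp only [fibS, Finset.mul_sum]
  apply Finset.sum_congr rfl
  intro i _
  split_ifs with h
  · rw [h]; ring
  · simp

lemma fibS_avg {I U : Type} [Fintype I] (φ : I → U) (w f : I → ℝ) (hw : ∀ i, 0 ≤ w i)
    (hf : ∀ i, f i ∈ Set.Icc (0:ℝ) 1) :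
    ∃ F : U → ℝ, (∀ u, F u ∈ Set.Icc (0:ℝ) 1) ∧ ∀ u, fibS φ (fun i => w i * f i) u = F u * fibS φ w u := by
  have h0 : ∀ u, 0 ≤ fibS φ (fun i => w i * f i) u :=
    fibS_nonneg φ _ (fun i => mul_nonneg (hw i) (hf i).1)
  have h1 : ∀ u, fibS φ (fun i => w i * f i) u ≤ fibS φ w u :=
    fibS_mono φ _ _ (fun i => mul_le_of_le_one_right (hw i) (hf i).2)
  refine ⟨fun u => fibS φ (fun i => w i * f i) u / fibS φ w u, fun u => ⟨?_, ?_⟩, fun u => ?_⟩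
  · exact div_nonneg (h0 u) ((h0 u).trans (h1 u))
  · exact div_le_one_of_le₀ (h1 u) ((h0 u).trans (h1 u))
  · by_cases h : fibS φ w u = 0
    · have := h0 u
      have := h1 u
      rw [h]; simp; linarith
    · field_simp

lemma fibS_fst {I K : Type} [Fintype I] [Fintype K] (X : I × K → ℝ) (i : I) :
    fibS Prod.fst X i = ∑ j, X (i, j) := by
  classical
  simp only [fibS, Fintype.sum_prod_type]
  rw [Finset.sum_comm]
  simp

lemma fibS_snd {I K : Type} [Fintype I] [Fintype K] (X : I × K → ℝ) (j : K) :
    fibS Prod.snd X j = ∑ i, X (i, j) := by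
  classical
  simp only [fibS, Fintype.sum_prod_type]
  simp

lemma marg {J : Type} [Fintype J] {n : ℕ} (hn : 0 < n) (φ : J → Fin n) (X : J → ℝ) (hX : ∀ x, 0 ≤ X x)
    (hφ : ∀ i, fibS φ X i = 1 / n) (H : Fin n → Fin n → ℝ) (ε : ℝ)
    (hH : CutLE (fun i k => H i k / (n:ℝ)^2) ε) (F G : J → ℝ)
    (hF : ∀ i, F i ∈ Set.Icc (0:ℝ) 1) (hG : ∀ i, G i ∈ Set.Icc (0:ℝ) 1) :
    |∑ x, ∑ y, (X x * F x) * (X y * G y) * H (φ x) (φ y)| ≤ ε := by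
  obtain ⟨F', hF', e1⟩ := fibS_avg φ X F hX hF
  obtain ⟨G', hG', e2⟩ := fibS_avg φ X G hX hG
  rw [fibS_group2 φ (fun x => X x * F x) (fun x => X x * G x) H]
  simp only [e1, e2, hφ]
  have := hH F' G' hF' hG'
  have hn' : (n:ℝ) ≠ 0 := by positivity
  refine le_of_eq_of_le ?_ this
  congr 1
  apply Finset.sum_congr rfl; intro i _
  apply Finset.sum_congr rfl; intro k _
  field_simp

lemma weight_change {U : Type} [Fintype U] (Y Y' F G : U → ℝ) (D : U → U → ℝ) (M : ℝ)
    (hY : ∀ u, 0 ≤ Y u) (hY' : ∀ u, 0 ≤ Y' u) (sY : ∑ u, Y u = 1) (sY' : ∑ u, Y' u = 1)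
    (hF : ∀ i, F i ∈ Set.Icc (0:ℝ) 1) (hG : ∀ i, G i ∈ Set.Icc (0:ℝ) 1) (hD : ∀ u v, |D u v| ≤ M) :
    |∑ u, ∑ v, (F u * Y' u) * (G v * Y' v) * D u v - ∑ u, ∑ v, (F u * Y u) * (G v * Y v) * D u v|
      ≤ 2 * M * ∑ u, |Y' u - Y u| := by
  have e : ∑ u, ∑ v, (F u * Y' u) * (G v * Y' v) * D u v - ∑ u, ∑ v, (F u * Y u) * (G v * Y v) * D u v
     = ∑ u, ∑ v, F u * G v * D u v * ((Y' u - Y u) * Y' v + Y u * (Y' v - Y v)) := by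
    simp only [← Finset.sum_sub_distrib]
    apply Finset.sum_congr rfl; intro u _
    apply Finset.sum_congr rfl; intro v _
    ring
  rw [e]
  have b : ∀ u v, |F u * G v * D u v * ((Y' u - Y u) * Y' v + Y u * (Y' v - Y v))|
      ≤ M * (|Y' u - Y u| * Y' v + Y u * |Y' v - Y v|) := by
    intro u v
    rw [abs_mul]
    have h1 : |F u * G v * D u v| ≤ M := by
      rw [abs_mul, abs_mul, abs_of_nonneg (hF u).1, abs_of_nonneg (hG v).1]
      have : F u * G v ≤ 1 := mul_le_one₀ (hF u).2 (hG v).1 (hG v).2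
      calc F u * G v * |D u v| ≤ 1 * |D u v| := by gcongr
        _ ≤ M := by rw [one_mul]; exact hD u v
    have h2 : |(Y' u - Y u) * Y' v + Y u * (Y' v - Y v)| ≤ |Y' u - Y u| * Y' v + Y u * |Y' v - Y v| := by
      refine (abs_add_le _ _).trans ?_
      rw [abs_mul, abs_mul, abs_of_nonneg (hY u), abs_of_nonneg (hY' v)]
    have hM : 0 ≤ M := (abs_nonneg _).trans (hD u v)
    gcongr
  calc _ ≤ ∑ u, ∑ v, M * (|Y' u - Y u| * Y' v + Y u * |Y' v - Y v|) := by
        refine (Finset.abs_sum_le_sum_abs _ _).trans ?_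
        gcongr with u _
        refine (Finset.abs_sum_le_sum_abs _ _).trans ?_
        gcongr with v _
        exact b u v
    _ = _ := by
        simp only [mul_add, Finset.sum_add_distrib, ← Finset.mul_sum, ← Finset.sum_mul, sY, sY']
        ring

lemma disc_core {n : ℕ} (hn : 0 < n) (A B : Fin n → Fin n → ℝ) (X : Fin n × Fin n → ℝ)
    (hX : ∀ x, 0 ≤ X x) (hrow : ∀ i, fibS Prod.fst X i = 1 / n) (hcol : ∀ i, fibS Prod.snd X i = 1 / n)
    (c ε M : ℝ)
    (hc : CutLE (fun x y => X x * X y * (A x.1 y.1 - B x.2 y.2)) c)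
    {L R : Type} [Fintype L] [Fintype R] (P : Fin n → L) (Q : Fin n → R)
    (a : L → L → ℝ) (b : R → R → ℝ)
    (hPa : CutLE (fun i k => (A i k - a (P i) (P k)) / (n:ℝ)^2) ε)
    (hQb : CutLE (fun i k => (B i k - b (Q i) (Q k)) / (n:ℝ)^2) ε)
    (hM : ∀ p p' q q', |a p p' - b q q'| ≤ M) :
    ∃ π : Equiv.Perm (Fin n), CutLE (fun i k => (A (π i) (π k) - B i k) / (n:ℝ)^2)
      (c + 4 * ε + 4 * M * (Fintype.card L * Fintype.card R) / n) := by
  classical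
  have hn0 : (0:ℝ) < n := by exact_mod_cast hn
  let ψ : Fin n × Fin n → L × R := fun x => (P x.1, Q x.2)
  set Y := fibS ψ X with hYdef
  have hY : ∀ u, 0 ≤ Y u := fibS_nonneg ψ X hX
  have sX : ∑ x, X x = 1 := by
    rw [← fibS_sum Prod.fst X]
    simp [hrow, hn0.ne']
  have sY : ∑ u, Y u = 1 := by rw [fibS_sum, sX]
  have hfl : ∀ u, ((⌊n * Y u⌋₊ : ℕ) : ℝ) ≤ n * Y u := fun u => Nat.floor_le (mul_nonneg hn0.le (hY u))
  obtain ⟨π, hπ⟩ := perm_round P Q (fun p q => ⌊n * Y (p, q)⌋₊) (by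
      intro p
      have : ((∑ q, ⌊n * Y (p, q)⌋₊ : ℕ) : ℝ) ≤ (Nat.card {i // P i = p} : ℕ) := by
        push_cast
        calc _ ≤ ∑ q, n * Y (p, q) := Finset.sum_le_sum fun q _ => hfl _
          _ = n * fibS P (fibS Prod.fst X) p := by
            rw [← Finset.mul_sum]
            congr 1
            rw [show fibS Prod.fst X = fun i => ∑ j, X (i, j) from funext (fibS_fst X)]
            simp only [Y, fibS]
            rw [Finset.sum_comm, Fintype.sum_prod_type]
            apply Finset.sum_congr rfl; intro i _
            simp only [ψ, Prod.mk.injEq, ite_and]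
            split_ifs <;> simp
          _ = _ := by
            have : fibS Prod.fst X = fun _ => 1 / (n:ℝ) := funext hrow
            rw [this]
            simp only [fibS, Nat.card_eq_fintype_card, Fintype.card_subtype]
            rw [← Finset.sum_filter]
            simp
            field_simp
      exact_mod_cast this) (by
      intro q
      have : ((∑ p, ⌊n * Y (p, q)⌋₊ : ℕ) : ℝ) ≤ (Nat.card {i // Q i = q} : ℕ) := by
        push_cast
        calc _ ≤ ∑ p, n * Y (p, q) := Finset.sum_le_sum fun q _ => hfl _
          _ = n * fibS Q (fibS Prod.snd X) q := by
            rw [← Finset.mul_sum]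
            congr 1
            rw [show fibS Prod.snd X = fun i => ∑ j, X (j, i) from funext (fibS_snd X)]
            simp only [Y, fibS]
            rw [Finset.sum_comm, Fintype.sum_prod_type, Finset.sum_comm]
            apply Finset.sum_congr rfl; intro i _
            simp only [ψ, Prod.mk.injEq, ite_and]
            split_ifs <;> simp
          _ = _ := by
            have : fibS Prod.snd X = fun _ => 1 / (n:ℝ) := funext hcol
            rw [this]
            simp only [fibS, Nat.card_eq_fintype_card, Fintype.card_subtype]
            rw [← Finset.sum_filter]
            simp
            field_simp
      exact_mod_cast this)
  refine ⟨π, ?_⟩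
  let φ : Fin n → L × R := fun i => (P (π i), Q i)
  let w : Fin n → ℝ := fun _ => 1 / n
  have hw : ∀ i, 0 ≤ w i := fun i => by positivity
  set Y' := fibS φ w with hY'def
  have hY' : ∀ u, 0 ≤ Y' u := fibS_nonneg φ w hw
  have sY' : ∑ u, Y' u = 1 := by rw [fibS_sum]; simp [w, hn0.ne']
  have hY'card : ∀ p q, Y' (p, q) = (Nat.card {i // P (π i) = p ∧ Q i = q} : ℕ) / n := by
    intro p q
    simp only [Y', fibS, φ, w, Nat.card_eq_fintype_card, Fintype.card_subtype]
    rw [Finset.card_filter]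
    push_cast
    rw [Finset.sum_div]
    apply Finset.sum_congr rfl; intro i _
    simp only [Prod.mk.injEq]
    split_ifs <;> simp
  have hlow : ∀ u, Y u - 1 / n ≤ Y' u := by
    rintro ⟨p, q⟩
    rw [hY'card]
    have h1 : ((⌊n * Y (p, q)⌋₊ : ℕ) : ℝ) ≤ (Nat.card {i // P (π i) = p ∧ Q i = q} : ℕ) := by
      exact_mod_cast hπ p q
    have h2 := Nat.lt_floor_add_one (n * Y (p, q))
    rw [le_div_iff₀ hn0, sub_mul, one_div, inv_mul_cancel₀ hn0.ne']
    linarith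
  have hL1 : ∑ u, |Y' u - Y u| ≤ 2 * (Fintype.card L * Fintype.card R) / n := by
    calc _ ≤ ∑ u, (Y' u - Y u + 2 / n) := by
          gcongr with u _
          have := hlow u
          have h1 : (0:ℝ) < 1 / n := by positivity
          have h2 : (2:ℝ) / n = 1 / n + 1 / n := by ring
          rw [h2, abs_le]
          constructor <;> linarith
      _ = _ := by
          rw [Finset.sum_add_distrib, Finset.sum_sub_distrib, sY, sY']
          simp; ring
  intro f g hf hg
  obtain ⟨F, hF, eF⟩ := fibS_avg φ w f hw hf
  obtain ⟨G, hG, eG⟩ := fibS_avg φ w g hw hg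
  let D : L × R → L × R → ℝ := fun u v => a u.1 v.1 - b u.2 v.2
  have hD : ∀ u v, |D u v| ≤ M := fun u v => hM _ _ _ _
  -- the four pieces of the decomposition
  have t1 := marg hn (fun i => π i) w hw (by
    intro i
    simp only [fibS, w]
    rw [Finset.sum_eq_single (π.symm i)]
    · simp
    · intro k _ hk
      rw [if_neg]
      rintro rfl; simp at hk
    · simp) _ ε hPa f g hf hg
  have t2 := marg hn (fun i => i) w hw (by intro i; simp [fibS, w]) _ ε hQb f g hf hg
  have t3 := weight_change Y Y' F G D M hY hY' sY sY' hF hG hD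
  have t4 := marg hn Prod.fst X hX hrow _ ε hPa (fun x => F (ψ x)) (fun x => G (ψ x))
    (fun x => hF _) (fun x => hG _)
  have t5 := marg hn Prod.snd X hX hcol _ ε hQb (fun x => F (ψ x)) (fun x => G (ψ x))
    (fun x => hF _) (fun x => hG _)
  have t6 := hc (fun x => F (ψ x)) (fun x => G (ψ x)) (fun x => hF _) (fun x => hG _)
  have m1 : ∑ i, ∑ k, (w i * f i) * (w k * g k) * D (φ i) (φ k)
      = ∑ u, ∑ v, (F u * Y' u) * (G v * Y' v) * D u v := by
    rw [fibS_group2 φ (fun i => w i * f i) (fun i => w i * g i) D]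
    simp only [eF, eG, Y']
  have m2 : ∑ x, ∑ y, (X x * F (ψ x)) * (X y * G (ψ y)) * D (ψ x) (ψ y)
      = ∑ u, ∑ v, (F u * Y u) * (G v * Y v) * D u v := by
    rw [fibS_group2 ψ (fun i => X i * F (ψ i)) (fun i => X i * G (ψ i)) D]
    simp only [fibS_comp, Y]
  have d1 : ∑ i, ∑ k, f i * g k * ((A (π i) (π k) - B i k) / (n:ℝ)^2)
      = ∑ i, ∑ k, (w i * f i) * (w k * g k) * (A (π i) (π k) - a (P (π i)) (P (π k)))
       - ∑ i, ∑ k, (w i * f i) * (w k * g k) * (B i k - b (Q i) (Q k))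
       + ∑ i, ∑ k, (w i * f i) * (w k * g k) * D (φ i) (φ k) := by
    simp only [← Finset.sum_sub_distrib, ← Finset.sum_add_distrib]
    apply Finset.sum_congr rfl; intro i _
    apply Finset.sum_congr rfl; intro k _
    simp only [w, D, φ]
    field_simp
    ring
  have d2 : ∑ x, ∑ y, (X x * F (ψ x)) * (X y * G (ψ y)) * D (ψ x) (ψ y)
      = ∑ x, ∑ y, F (ψ x) * G (ψ y) * (X x * X y * (A x.1 y.1 - B x.2 y.2))
       - ∑ x, ∑ y, (X x * F (ψ x)) * (X y * G (ψ y)) * (A x.1 y.1 - a (P x.1) (P y.1))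
       + ∑ x, ∑ y, (X x * F (ψ x)) * (X y * G (ψ y)) * (B x.2 y.2 - b (Q x.2) (Q y.2)) := by
    simp only [← Finset.sum_sub_distrib, ← Finset.sum_add_distrib]
    apply Finset.sum_congr rfl; intro i _
    apply Finset.sum_congr rfl; intro k _
    simp only [D, ψ]
    ring
  have hM0 : 0 ≤ M := by
    have i0 : Fin n := ⟨0, hn⟩
    exact (abs_nonneg _).trans (hM (P i0) (P i0) (Q i0) (Q i0))
  have t7 : 2 * M * ∑ u, |Y' u - Y u| ≤ 4 * M * (Fintype.card L * Fintype.card R) / n := by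
    calc _ ≤ 2 * M * (2 * (Fintype.card L * Fintype.card R) / n) := by gcongr
      _ = _ := by ring
  rw [d1, m1]
  rw [← m2, d2] at t3
  rw [abs_le] at *
  constructor <;> linarith [t1.1, t1.2, t2.1, t2.2, t3.1, t3.2, t4.1, t4.2, t5.1, t5.2, t6.1, t6.2]


lemma disc_main {n : ℕ} (hn : 0 < n) (hl : 324 ≤ Real.logb 2 (n:ℝ))
    (A B : Fin n → Fin n → ℝ) (hA : ∀ i k, A i k ∈ Set.Icc (0:ℝ) 1)
    (hB : ∀ i k, B i k ∈ Set.Icc (0:ℝ) 1) (X : Fin n × Fin n → ℝ)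
    (hX : ∀ x, 0 ≤ X x) (hrow : ∀ i, fibS Prod.fst X i = 1 / n) (hcol : ∀ i, fibS Prod.snd X i = 1 / n)
    (c : ℝ) (hc : CutLE (fun x y => X x * X y * (A x.1 y.1 - B x.2 y.2)) c) :
    ∃ π : Equiv.Perm (Fin n), CutLE (fun i k => (A (π i) (π k) - B i k) / (n:ℝ)^2)
      (c + 17 / Real.sqrt (Real.logb 2 (n:ℝ))) := by
  have hn0 : (0:ℝ) < n := by exact_mod_cast hn
  set l := Real.logb 2 (n:ℝ) with hldef
  have hl0 : 0 < l := by linarith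
  set r := Real.sqrt l with hr
  have hr0 : 0 < r := Real.sqrt_pos.2 hl0
  have hrr : r * r = l := Real.mul_self_sqrt hl0.le
  set m := ⌊l / 8⌋₊ with hm
  have hm1 : (m:ℝ) ≤ l / 8 := Nat.floor_le (by positivity)
  have hm2 : l / 8 < m + 1 := Nat.lt_floor_add_one _
  set ε : ℝ := 3.2 / r with hε
  have hε0 : 0 < ε := by positivity
  have hε2 : ε ^ 2 = 10.24 / l := by rw [hε, div_pow, ← hrr]; ring
  have hmε : 1 < m * ε ^ 2 := by
    rw [hε2, mul_div_assoc', lt_div_iff₀ hl0]; linarith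
  obtain ⟨L, _, P, a, cL, ha, hPa⟩ := weak_reg' hn A hA ε hε0 m hmε
  obtain ⟨R, _, Q, b, cR, hb, hQb⟩ := weak_reg' hn B hB ε hε0 m hmε
  obtain ⟨π, hπ⟩ := disc_core hn A B X hX hrow hcol c ε (2 * (m * ε)) hc P Q a b hPa hQb (by
    intro p p' q q'
    refine (abs_sub _ _).trans ?_
    linarith [ha p p', hb q q'])
  refine ⟨π, fun f g hf hg => (hπ f g hf hg).trans ?_⟩
  rw [cL, cR]
  set s : ℝ := (2:ℝ) ^ (l / 2) with hs
  have hs0 : 0 < s := by positivity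
  have hss : s * s = n := by
    rw [hs, ← Real.rpow_add (by norm_num)]
    rw [add_halves, hldef, Real.rpow_logb (by norm_num) (by norm_num) hn0]
  have hls : l ≤ s := by
    have h1 : s = Real.exp (Real.log 2 * (l / 2)) := by
      rw [hs, Real.rpow_def_of_pos (by norm_num)]
    have h2 := Real.quadratic_le_exp_of_nonneg (x := Real.log 2 * (l / 2)) (by positivity)
    rw [← h1] at h2
    have h3 := Real.log_two_gt_d9
    have h4 : 0.3 * l ≤ Real.log 2 * (l / 2) := by nlinarith
    have h5 : (0.3 * l) ^ 2 ≤ (Real.log 2 * (l / 2)) ^ 2 := by gcongr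
    nlinarith
  have hK : ((4 ^ m : ℕ) : ℝ) * ((4 ^ m : ℕ) : ℝ) ≤ s := by
    have : ((4 ^ m : ℕ) : ℝ) * ((4 ^ m : ℕ) : ℝ) = (2:ℝ) ^ ((4 * m : ℕ) : ℝ) := by
      rw [Real.rpow_natCast, pow_mul]; push_cast; rw [← mul_pow]; norm_num
    rw [this, hs]
    apply Real.rpow_le_rpow_of_exponent_le (by norm_num)
    push_cast; linarith
  have e1 : 4 * (2 * (m * ε)) * (((4 ^ m : ℕ) : ℝ) * ((4 ^ m : ℕ) : ℝ)) / n ≤ ε := by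
    rw [div_le_iff₀ hn0, ← hss]
    calc 4 * (2 * (m * ε)) * (((4 ^ m : ℕ) : ℝ) * ((4 ^ m : ℕ) : ℝ)) ≤ 4 * (2 * (m * ε)) * s := by gcongr
      _ ≤ 4 * (2 * (l / 8 * ε)) * s := by gcongr
      _ = ε * (l * s) := by ring
      _ ≤ ε * (s * s) := by gcongr
  have e2 : 5 * ε ≤ 17 / r := by
    rw [hε, mul_div_assoc']; gcongr; norm_num
  linarith


/-- Lebesgue measure on `[0,1]`. -/
def mu01 : Measure ℝ := volume.restrict (Set.Icc (0:ℝ) 1)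

instance mu01_prob : IsProbabilityMeasure mu01 := ⟨by simp [mu01]⟩

lemma mu01_restrict {S : Set ℝ} (hS : MeasurableSet S) (h : S ⊆ Set.Icc 0 1) :
    mu01.restrict S = volume.restrict S := by
  rw [mu01, Measure.restrict_restrict hS, Set.inter_eq_left.2 h]

lemma vol_restrict_prod {S T : Set ℝ} (hS : MeasurableSet S) (hT : MeasurableSet T)
    (h : S ⊆ Set.Icc 0 1) (h' : T ⊆ Set.Icc 0 1) :
    (volume : Measure (ℝ × ℝ)).restrict (S ×ˢ T) = (mu01.restrict S).prod (mu01.restrict T) := by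
  rw [mu01_restrict hS h, mu01_restrict hT h', Measure.prod_restrict, Measure.volume_eq_prod]

lemma ae_mu01 : ∀ᵐ x ∂mu01, x ∈ Set.Ioc (0:ℝ) 1 := by
  rw [mu01, ← restrict_Ioc_eq_restrict_Icc]
  exact ae_restrict_mem measurableSet_Ioc

lemma ae_prod_of_ae {p : ℝ → Prop} {ν₁ ν₂ : Measure ℝ} [SFinite ν₁] [SFinite ν₂]
    (h₁ : ∀ᵐ x ∂ν₁, p x) (h₂ : ∀ᵐ x ∂ν₂, p x) :
    ∀ᵐ z ∂(ν₁.prod ν₂), p z.1 ∧ p z.2 := by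
  filter_upwards [Measure.quasiMeasurePreserving_fst.ae h₁,
    Measure.quasiMeasurePreserving_snd.ae h₂] with z a b
  exact ⟨a, b⟩

lemma int_bdd {U : ℝ × ℝ → ℝ} {C : ℝ} (hU : ∀ p, |U p| ≤ C)
    (S T : Set ℝ) (h : S ⊆ Set.Icc 0 1) (h' : T ⊆ Set.Icc 0 1) :
    |∫ p in S ×ˢ T, U p| ≤ C := by
  have hC : 0 ≤ C := (abs_nonneg _).trans (hU 0)
  have hle : (volume : Measure (ℝ × ℝ)) (S ×ˢ T) ≤ 1 := by
    calc _ ≤ (volume : Measure (ℝ × ℝ)) (Set.Icc 0 1 ×ˢ Set.Icc 0 1) :=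
          measure_mono (Set.prod_mono h h')
      _ = 1 := by rw [Measure.volume_eq_prod, Measure.prod_prod]; simp
  have := norm_setIntegral_le_of_norm_le_const (μ := (volume : Measure (ℝ × ℝ))) (s := S ×ˢ T) (f := U)
    (C := C) (hle.trans_lt ENNReal.one_lt_top) (fun x _ => hU x)
  refine this.trans ?_
  have : (volume : Measure (ℝ × ℝ)).real (S ×ˢ T) ≤ 1 := by
    rw [Measure.real]
    exact ENNReal.toReal_le_of_le_ofReal zero_le_one (by simpa using hle)
  nlinarith

lemma le_cutNorm {U : ℝ → ℝ → ℝ} {C : ℝ} (hU : ∀ x y, |U x y| ≤ C) {S T : Set ℝ}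
    (hS : MeasurableSet S) (hT : MeasurableSet T) (h : S ⊆ Set.Icc 0 1) (h' : T ⊆ Set.Icc 0 1) :
    |∫ p in S ×ˢ T, U p.1 p.2| ≤ cutNorm U := by
  apply le_csSup
  · refine ⟨C, ?_⟩
    rintro r ⟨S, T, _, _, h, h', rfl⟩
    exact int_bdd (fun p => hU p.1 p.2) S T h h'
  · exact ⟨S, T, hS, hT, h, h', rfl⟩

lemma cutNorm_le {U : ℝ → ℝ → ℝ} {c : ℝ}
    (hU : ∀ S T : Set ℝ, MeasurableSet S → MeasurableSet T → S ⊆ Set.Icc 0 1 → T ⊆ Set.Icc 0 1 →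
      |∫ p in S ×ˢ T, U p.1 p.2| ≤ c) : cutNorm U ≤ c := by
  apply csSup_le
  · exact ⟨_, ∅, ∅, MeasurableSet.empty, MeasurableSet.empty, by simp, by simp, rfl⟩
  · rintro r ⟨S, T, a, b, h, h', rfl⟩
    exact hU S T a b h h'

lemma cutNorm_nonneg (U : ℝ → ℝ → ℝ) : 0 ≤ cutNorm U := by
  apply Real.sSup_nonneg
  rintro r ⟨S, T, a, b, h, h', rfl⟩
  exact abs_nonneg _

lemma integrable_bdd {α : Type} [MeasurableSpace α] {U : α → ℝ} (hm : Measurable U) {C : ℝ} (hU : ∀ p, |U p| ≤ C)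
    (ν : Measure α) [IsFiniteMeasure ν] : Integrable U ν :=
  Integrable.of_bound hm.aestronglyMeasurable C (Filter.Eventually.of_forall hU)

lemma half_ext {U : ℝ × ℝ → ℝ} (hm : Measurable U) {C : ℝ} (hU : ∀ p, |U p| ≤ C)
    (ν₁ ν₂ μ : Measure ℝ) [IsFiniteMeasure ν₁] [IsFiniteMeasure ν₂] [IsFiniteMeasure μ]
    (h₁ : ν₁ ≤ μ) :
    ∃ S, MeasurableSet S ∧ ∫ p, U p ∂(ν₁.prod ν₂) ≤ ∫ p, U p ∂((μ.restrict S).prod ν₂) := by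
  let h : ℝ → ℝ := fun x => ∫ y, U (x, y) ∂ν₂
  have hh : Measurable h := by
    have : StronglyMeasurable h := hm.stronglyMeasurable.integral_prod_right'
    exact this.measurable
  have hb : ∀ x, |h x| ≤ C * ν₂.real univ := by
    intro x
    exact norm_integral_le_of_norm_le_const (μ := ν₂) (f := fun y => U (x, y)) (Filter.Eventually.of_forall fun y => hU (x, y))
  have hS : MeasurableSet {x | 0 < h x} := measurableSet_lt measurable_const hh
  refine ⟨{x | 0 < h x}, hS, ?_⟩
  rw [integral_prod _ (integrable_bdd hm hU _), integral_prod _ (integrable_bdd hm hU _)]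
  change ∫ x, h x ∂ν₁ ≤ ∫ x in {x | 0 < h x}, h x ∂μ
  rw [← integral_indicator hS]
  have hi : Measurable ({x | 0 < h x}.indicator h) := hh.indicator hS
  have hib : ∀ x, |({x | 0 < h x}.indicator h) x| ≤ C * ν₂.real univ := by
    intro x
    refine le_trans ?_ (hb x)
    rw [Set.indicator_apply]
    split_ifs
    · exact le_refl _
    · simp
  calc ∫ x, h x ∂ν₁ ≤ ∫ x, ({x | 0 < h x}.indicator h) x ∂ν₁ := by
        apply integral_mono (integrable_bdd hh hb _) (integrable_bdd hi hib _)
        intro x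
        simp only [Set.indicator_apply, Set.mem_ofPred_eq]
        split_ifs with hx
        · exact le_refl _
        · exact not_lt.1 hx
    _ ≤ _ := by
        apply integral_mono_measure h₁ _ (integrable_bdd hi hib _)
        apply Filter.Eventually.of_forall
        intro x
        simp only [Set.indicator_apply, Set.mem_ofPred_eq, Pi.zero_apply]
        split_ifs with hx
        · exact hx.le
        · exact le_refl _

lemma pm_le {U : ℝ × ℝ → ℝ} (hm : Measurable U) {C c : ℝ} (hU : ∀ p, |U p| ≤ C)
    (hc : ∀ S T : Set ℝ, MeasurableSet S → MeasurableSet T → S ⊆ Set.Icc 0 1 → T ⊆ Set.Icc 0 1 →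
      ∫ p in S ×ˢ T, U p ≤ c)
    (ν₁ ν₂ : Measure ℝ) [IsFiniteMeasure ν₁] [IsFiniteMeasure ν₂] (h₁ : ν₁ ≤ mu01) (h₂ : ν₂ ≤ mu01) :
    ∫ p, U p ∂(ν₁.prod ν₂) ≤ c := by
  obtain ⟨S, hS, e1⟩ := half_ext hm hU ν₁ ν₂ mu01 h₁
  have hm' : Measurable (fun p : ℝ × ℝ => U p.swap) := hm.comp measurable_swap
  obtain ⟨T, hT, e2⟩ := half_ext hm' (fun p => hU p.swap) ν₂ (mu01.restrict S) mu01 h₂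
  rw [integral_prod_swap, integral_prod_swap] at e2
  refine e1.trans (e2.trans ?_)
  have := hc (S ∩ Set.Icc 0 1) (T ∩ Set.Icc 0 1) (hS.inter measurableSet_Icc) (hT.inter measurableSet_Icc)
    Set.inter_subset_right Set.inter_subset_right
  rw [mu01, Measure.restrict_restrict hS, Measure.restrict_restrict hT]
  rw [Measure.volume_eq_prod, ← Measure.prod_restrict] at this
  exact this

lemma pm_abs {U : ℝ × ℝ → ℝ} (hm : Measurable U) {C c : ℝ} (hU : ∀ p, |U p| ≤ C)
    (hc : ∀ S T : Set ℝ, MeasurableSet S → MeasurableSet T → S ⊆ Set.Icc 0 1 → T ⊆ Set.Icc 0 1 →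
      |∫ p in S ×ˢ T, U p| ≤ c)
    (ν₁ ν₂ : Measure ℝ) [IsFiniteMeasure ν₁] [IsFiniteMeasure ν₂] (h₁ : ν₁ ≤ mu01) (h₂ : ν₂ ≤ mu01) :
    |∫ p, U p ∂(ν₁.prod ν₂)| ≤ c := by
  rw [abs_le]
  constructor
  · have := pm_le (U := fun p => - U p) hm.neg (C := C) (c := c) (fun p => by rw [abs_neg]; exact hU p)
      (fun S T a b d e => by
        rw [integral_neg]; linarith [(abs_le.1 (hc S T a b d e)).1]) ν₁ ν₂ h₁ h₂
    rw [integral_neg] at this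
    linarith
  · exact pm_le hm hU (fun S T a b d e => (abs_le.1 (hc S T a b d e)).2) ν₁ ν₂ h₁ h₂

lemma mp_facts {σ : ℝ → ℝ} (h : IsMPSelf σ) : Measurable σ ∧ mu01.map σ = mu01 :=
  ⟨h.1.measurable, h.1.map_eq⟩

lemma pullback_le {U : ℝ × ℝ → ℝ} (hm : Measurable U) {C c : ℝ} (hU : ∀ p, |U p| ≤ C)
    (hc : ∀ S T : Set ℝ, MeasurableSet S → MeasurableSet T → S ⊆ Set.Icc 0 1 → T ⊆ Set.Icc 0 1 →
      |∫ p in S ×ˢ T, U p| ≤ c) {σ : ℝ → ℝ} (hσ : IsMPSelf σ)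
    (S T : Set ℝ) (hS : MeasurableSet S) (hT : MeasurableSet T)
    (h : S ⊆ Set.Icc 0 1) (h' : T ⊆ Set.Icc 0 1) :
    |∫ p in S ×ˢ T, U (σ p.1, σ p.2)| ≤ c := by
  obtain ⟨ms, me⟩ := mp_facts hσ
  rw [vol_restrict_prod hS hT h h']
  have hle : ∀ S, (mu01.restrict S).map σ ≤ mu01 := by
    intro S
    conv_rhs => rw [← me]
    exact Measure.map_mono Measure.restrict_le_self ms
  have := pm_abs hm hU hc ((mu01.restrict S).map σ) ((mu01.restrict T).map σ) (hle S) (hle T)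
  rw [Measure.map_prod_map _ _ ms ms, integral_map (ms.prodMap ms).aemeasurable hm.aestronglyMeasurable] at this
  exact this

lemma fiber_int {I : Type} [Fintype I] [MeasurableSpace I] [MeasurableSingletonClass I]
    (φ : ℝ → I) (hφ : Measurable φ) (D : I → I → ℝ) (ν₁ ν₂ : Measure ℝ)
    [IsFiniteMeasure ν₁] [IsFiniteMeasure ν₂] :
    ∫ p, D (φ p.1) (φ p.2) ∂(ν₁.prod ν₂)
      = ∑ a, ∑ b, ν₁.real (φ ⁻¹' {a}) * ν₂.real (φ ⁻¹' {b}) * D a b := by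
  have hD : Measurable (fun z : I × I => D z.1 z.2) := measurable_of_finite _
  have e := integral_map (μ := ν₁.prod ν₂) (φ := Prod.map φ φ) (f := fun z : I × I => D z.1 z.2)
    (hφ.prodMap hφ).aemeasurable hD.aestronglyMeasurable
  rw [← Measure.map_prod_map _ _ hφ hφ] at e
  change _ = ∫ p, D (φ p.1) (φ p.2) ∂(ν₁.prod ν₂) at e
  rw [← e, integral_fintype (.of_finite), Fintype.sum_prod_type]
  apply Finset.sum_congr rfl; intro a _
  apply Finset.sum_congr rfl; intro b _
  rw [← Set.singleton_prod_singleton, measureReal_prod_prod,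
    map_measureReal_apply hφ (measurableSet_singleton a), map_measureReal_apply hφ (measurableSet_singleton b),
    smul_eq_mul]

lemma cutLE_of_int {I : Type} [Fintype I] [MeasurableSpace I] [MeasurableSingletonClass I]
    (φ : ℝ → I) (hφ : Measurable φ) (D : I → I → ℝ) (c : ℝ)
    (hc : ∀ S T : Set ℝ, MeasurableSet S → MeasurableSet T → S ⊆ Set.Icc 0 1 → T ⊆ Set.Icc 0 1 →
      |∫ p in S ×ˢ T, D (φ p.1) (φ p.2)| ≤ c) :
    CutLE (fun a b => mu01.real (φ ⁻¹' {a}) * mu01.real (φ ⁻¹' {b}) * D a b) c := by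
  classical
  apply cutLE_of_sets
  intro S T
  have hmS : ∀ S : Finset I, MeasurableSet (φ ⁻¹' (S : Set I)) := fun S => hφ S.measurableSet
  have := hc (φ ⁻¹' S ∩ Set.Icc 0 1) (φ ⁻¹' T ∩ Set.Icc 0 1) ((hmS S).inter measurableSet_Icc)
    ((hmS T).inter measurableSet_Icc) Set.inter_subset_right Set.inter_subset_right
  rw [vol_restrict_prod ((hmS S).inter measurableSet_Icc)
    ((hmS T).inter measurableSet_Icc) Set.inter_subset_right Set.inter_subset_right,
    fiber_int φ hφ] at this
  have e : ∀ (S : Finset I) (a : I), (mu01.restrict (φ ⁻¹' S ∩ Set.Icc 0 1)).real (φ ⁻¹' {a})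
      = if a ∈ S then mu01.real (φ ⁻¹' {a}) else 0 := by
    intro S a
    have h1 : mu01.restrict (φ ⁻¹' S ∩ Set.Icc 0 1) = mu01.restrict (φ ⁻¹' S) := by
      rw [mu01, Measure.restrict_restrict ((hmS S).inter measurableSet_Icc),
        Measure.restrict_restrict (hmS S), Set.inter_assoc, Set.inter_self]
    rw [h1, measureReal_restrict_apply (hφ (measurableSet_singleton a))]
    split_ifs with h
    · congr 1
      rw [Set.inter_eq_left]
      intro x hx
      simp only [Set.mem_preimage, Set.mem_singleton_iff] at hx
      simp [hx, h]
    · have : φ ⁻¹' {a} ∩ φ ⁻¹' (S : Set I) = ∅ := by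
        ext x
        simp only [Set.mem_inter_iff, Set.mem_preimage, Set.mem_singleton_iff, Finset.mem_coe,
          Set.mem_empty_iff_false, iff_false]
        rintro ⟨rfl, h2⟩
        exact h h2
      rw [this]; simp
  simp only [e] at this
  refine le_of_eq_of_le ?_ this
  congr 1
  simp [Finset.sum_ite_mem, ite_mul, mul_ite]


/-- Index of the interval `((i)/n, (i+1)/n]` containing `x`. -/
def idxF {n : ℕ} (hn : 0 < n) (x : ℝ) : Fin n :=
  ⟨min (⌈(n:ℝ) * x⌉₊ - 1) (n - 1), by omega⟩

lemma measurable_idxF {n : ℕ} (hn : 0 < n) : Measurable (idxF hn) := by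
  have h : Measurable (fun x : ℝ => ⌈(n:ℝ) * x⌉₊) := Nat.measurable_ceil.comp (measurable_const_mul _)
  have h2 : Measurable (fun k : ℕ => (⟨min (k - 1) (n - 1), by omega⟩ : Fin n)) := measurable_from_top
  exact h2.comp h

lemma idxF_ceil {n : ℕ} (hn : 0 < n) {x : ℝ} (hx : x ∈ Set.Ioc (0:ℝ) 1) :
    ⌈(n:ℝ) * x⌉₊ = (idxF hn x : ℕ) + 1 := by
  have hn0 : (0:ℝ) < n := by exact_mod_cast hn
  have h1 : 0 < ⌈(n:ℝ) * x⌉₊ := Nat.ceil_pos.2 (mul_pos hn0 hx.1)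
  have h2 : ⌈(n:ℝ) * x⌉₊ ≤ n := Nat.ceil_le.2 (by nlinarith [hx.2])
  simp only [idxF]
  omega

lemma idxF_eq_iff {n : ℕ} (hn : 0 < n) {x : ℝ} (hx : x ∈ Set.Ioc (0:ℝ) 1) (i : Fin n) :
    idxF hn x = i ↔ x ∈ Set.Ioc (((i : ℕ) : ℝ)/n) ((((i : ℕ) : ℝ) + 1)/n) := by
  have hn0 : (0:ℝ) < n := by exact_mod_cast hn
  have h := idxF_ceil hn hx
  have h3 : idxF hn x = i ↔ ⌈(n:ℝ) * x⌉₊ = (i:ℕ) + 1 := by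
    rw [h, Fin.ext_iff]; omega
  rw [h3, Nat.ceil_eq_iff (by omega), Set.mem_Ioc, div_lt_iff₀ hn0, le_div_iff₀ hn0]
  push_cast
  simp [mul_comm]

lemma idxF_intceil {n : ℕ} (hn : 0 < n) {x : ℝ} (hx : x ∈ Set.Ioc (0:ℝ) 1) (i : Fin n) :
    ⌈(n : ℝ) * x⌉ = ((i : ℕ) : ℤ) + 1 ↔ idxF hn x = i := by
  have hn0 : (0:ℝ) < n := by exact_mod_cast hn
  have h := idxF_ceil hn hx
  have h1 : ((⌈(n:ℝ) * x⌉₊ : ℕ) : ℤ) = ⌈(n : ℝ) * x⌉ :=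
    Int.natCast_ceil_eq_ceil (mul_pos hn0 hx.1).le
  rw [← h1, h, Fin.ext_iff]; push_cast; omega

lemma Ioc_sub {n : ℕ} (i : Fin n) :
    Set.Ioc (((i : ℕ) : ℝ)/n) ((((i : ℕ) : ℝ) + 1)/n) ⊆ Set.Ioc 0 1 := by
  have hn0 : (0:ℝ) < n := by exact_mod_cast i.pos
  intro x hx
  refine ⟨lt_of_le_of_lt (by positivity) hx.1, hx.2.trans ?_⟩
  rw [div_le_one hn0]
  exact_mod_cast i.2

lemma mu01_idx {n : ℕ} (hn : 0 < n) (i : Fin n) : mu01.real (idxF hn ⁻¹' {i}) = 1 / n := by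
  have hn0 : (0:ℝ) < n := by exact_mod_cast hn
  have h1 : mu01.real (idxF hn ⁻¹' {i}) = mu01.real (Set.Ioc (((i : ℕ) : ℝ)/n) ((((i : ℕ) : ℝ) + 1)/n)) := by
    apply measureReal_congr
    filter_upwards [ae_mu01] with x hx
    apply propext
    exact idxF_eq_iff hn hx i
  rw [h1, mu01, measureReal_restrict_apply measurableSet_Ioc,
    Set.inter_eq_left.2 ((Ioc_sub i).trans Set.Ioc_subset_Icc_self), Real.volume_real_Ioc_of_le]
  · ring
  · gcongr; linarith

open Classical in
lemma graphon_step {n : ℕ} (hn : 0 < n) (G : SimpleGraph (Fin n)) {x y : ℝ}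
    (hx : x ∈ Set.Ioc (0:ℝ) 1) (hy : y ∈ Set.Ioc (0:ℝ) 1) :
    graphonOfGraph G x y = if G.Adj (idxF hn x) (idxF hn y) then 1 else 0 := by
  unfold graphonOfGraph
  simp only [idxF_intceil hn hx, idxF_intceil hn hy]
  congr 1
  simp

/-- The matrix of averages of `W` over the squares of the `n`-grid. -/
def barMat (n : ℕ) (W : ℝ → ℝ → ℝ) (i j : Fin n) : ℝ :=
  ⨍ p in (Set.Ioc (((i : ℕ) : ℝ)/n) ((((i : ℕ) : ℝ) + 1)/n)) ×ˢ
    (Set.Ioc (((j : ℕ) : ℝ)/n) ((((j : ℕ) : ℝ) + 1)/n)), W p.1 p.2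

lemma bar_step {n : ℕ} (hn : 0 < n) (W : ℝ → ℝ → ℝ) {x y : ℝ}
    (hx : x ∈ Set.Ioc (0:ℝ) 1) (hy : y ∈ Set.Ioc (0:ℝ) 1) :
    barStep n W x y = barMat n W (idxF hn x) (idxF hn y) := by
  classical
  unfold barStep condExpPart
  simp only [← idxF_eq_iff hn hx, ← idxF_eq_iff hn hy, ite_and]
  simp [barMat]

lemma graphonOfGraph_mem {n : ℕ} (G : SimpleGraph (Fin n)) (x y : ℝ) :
    graphonOfGraph G x y ∈ Set.Icc (0:ℝ) 1 := by
  unfold graphonOfGraph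
  split_ifs <;> simp

lemma sq_vol {n : ℕ} (i j : Fin n) : (volume : Measure (ℝ × ℝ)).real
    ((Set.Ioc (((i : ℕ) : ℝ)/n) ((((i : ℕ) : ℝ) + 1)/n)) ×ˢ
    (Set.Ioc (((j : ℕ) : ℝ)/n) ((((j : ℕ) : ℝ) + 1)/n))) = 1 / (n:ℝ)^2 := by
  rw [Measure.volume_eq_prod, measureReal_prod_prod, Real.volume_real_Ioc_of_le (by gcongr; linarith),
    Real.volume_real_Ioc_of_le (by gcongr; linarith)]
  ring

lemma barMat_mem {n : ℕ} {W : ℝ → ℝ → ℝ} (hW : IsGraphon W) (i j : Fin n) :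
    barMat n W i j ∈ Set.Icc (0:ℝ) 1 := by
  have hn0 : (0:ℝ) < n := by exact_mod_cast i.pos
  unfold barMat
  rw [setAverage_eq, sq_vol, smul_eq_mul]
  constructor
  · apply mul_nonneg (by positivity)
    exact integral_nonneg fun p => (hW.2.2 _ _).1
  · have := norm_setIntegral_le_of_norm_le_const (μ := (volume : Measure (ℝ × ℝ)))
      (s := (Set.Ioc (((i : ℕ) : ℝ)/n) ((((i : ℕ) : ℝ) + 1)/n)) ×ˢ
       (Set.Ioc (((j : ℕ) : ℝ)/n) ((((j : ℕ) : ℝ) + 1)/n))) (f := fun p => W p.1 p.2)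
      (C := 1) (by
        rw [Measure.volume_eq_prod, Measure.prod_prod]
        simp [ENNReal.mul_lt_top]) (fun p _ => by
          rw [Real.norm_eq_abs, abs_of_nonneg (hW.2.2 _ _).1]; exact (hW.2.2 _ _).2)
    rw [sq_vol] at this
    have h2 := (le_abs_self _).trans this
    rw [one_div, inv_inv]
    calc _ ≤ (n:ℝ)^2 * (1 * (1 / (n:ℝ)^2)) := by gcongr
      _ = 1 := by field_simp

lemma barStep_mem {n : ℕ} (hn : 0 < n) {W : ℝ → ℝ → ℝ} (hW : IsGraphon W) (x y : ℝ) :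
    barStep n W x y ∈ Set.Icc (0:ℝ) 1 := by
  by_cases h : x ∈ Set.Ioc (0:ℝ) 1 ∧ y ∈ Set.Ioc (0:ℝ) 1
  · rw [bar_step hn W h.1 h.2]
    exact barMat_mem hW _ _
  · have : barStep n W x y = 0 := by
      unfold barStep condExpPart
      apply Finset.sum_eq_zero; intro i _
      apply Finset.sum_eq_zero; intro j _
      rw [if_neg]
      rintro ⟨h1, h2⟩
      exact h ⟨Ioc_sub i h1, Ioc_sub j h2⟩
    rw [this]; simp

lemma abs_sub_le_one' {a b : ℝ} (ha : a ∈ Set.Icc (0:ℝ) 1) (hb : b ∈ Set.Icc (0:ℝ) 1) : |a - b| ≤ 1 := by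
  rw [abs_le]
  constructor <;> linarith [ha.1, ha.2, hb.1, hb.2]

/-- On sets inside `[0,1]`, integrals only see the values on `(0,1]²` -/
lemma int_congr {U V : ℝ × ℝ → ℝ} {S T : Set ℝ} (hS : MeasurableSet S) (hT : MeasurableSet T)
    (h : S ⊆ Set.Icc 0 1) (h' : T ⊆ Set.Icc 0 1) {p : ℝ → Prop} (hp : ∀ᵐ x ∂mu01, p x)
    (hUV : ∀ x y, p x → p y → U (x, y) = V (x, y)) :
    ∫ z in S ×ˢ T, U z = ∫ z in S ×ˢ T, V z := by
  rw [vol_restrict_prod hS hT h h']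
  apply integral_congr_ae
  filter_upwards [ae_prod_of_ae (ae_restrict_of_ae (s := S) hp) (ae_restrict_of_ae (s := T) hp)] with z hz
  exact hUV z.1 z.2 hz.1 hz.2

lemma int_of_cutLE {n : ℕ} (hn : 0 < n) (D : Fin n → Fin n → ℝ) (c : ℝ)
    (hD : CutLE (fun i k => D i k / (n:ℝ)^2) c)
    {S T : Set ℝ} (hS : MeasurableSet S) (hT : MeasurableSet T)
    (h : S ⊆ Set.Icc 0 1) (h' : T ⊆ Set.Icc 0 1) :
    |∫ p in S ×ˢ T, D (idxF hn p.1) (idxF hn p.2)| ≤ c := by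
  have hn0 : (0:ℝ) < n := by exact_mod_cast hn
  rw [vol_restrict_prod hS hT h h', fiber_int _ (measurable_idxF hn)]
  have hf : ∀ S : Set ℝ, ∀ i, (n:ℝ) * (mu01.restrict S).real (idxF hn ⁻¹' {i}) ∈ Set.Icc (0:ℝ) 1 := by
    intro S i
    refine ⟨by positivity, ?_⟩
    have : (mu01.restrict S).real (idxF hn ⁻¹' {i}) ≤ mu01.real (idxF hn ⁻¹' {i}) := by
      exact ENNReal.toReal_mono (measure_ne_top _ _) (Measure.restrict_le_self _)
    rw [mu01_idx, le_div_iff₀ hn0] at this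
    linarith
  refine le_of_eq_of_le ?_ (hD _ _ (hf S) (hf T))
  congr 1
  apply Finset.sum_congr rfl; intro i _
  apply Finset.sum_congr rfl; intro k _
  field_simp


lemma meas_idx2 {n : ℕ} (hn : 0 < n) (M : Fin n → Fin n → ℝ) :
    Measurable (fun p : ℝ × ℝ => M (idxF hn p.1) (idxF hn p.2)) := by
  have h0 : Measurable (Function.uncurry M) := measurable_of_finite _
  have h1 : Measurable (fun p : ℝ × ℝ => (idxF hn p.1, idxF hn p.2)) :=
    ((measurable_idxF hn).comp measurable_fst).prodMk ((measurable_idxF hn).comp measurable_snd)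
  exact h0.comp h1

attribute [irreducible] idxF


lemma row_sum {n : ℕ} (hn : 0 < n) {σ₁ σ₂ : ℝ → ℝ} (h₁ : IsMPSelf σ₁) (h₂ : IsMPSelf σ₂) (i : Fin n) :
    ∑ j, mu01.real ((fun x => (idxF hn (σ₁ x), idxF hn (σ₂ x))) ⁻¹' {(i, j)}) = 1 / n := by
  obtain ⟨m1, e1⟩ := mp_facts h₁
  obtain ⟨m2, e2⟩ := mp_facts h₂
  have n1 : Measurable (fun x => idxF hn (σ₁ x)) := (measurable_idxF hn).comp m1
  have n2 : Measurable (fun x => idxF hn (σ₂ x)) := (measurable_idxF hn).comp m2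
  have key := sum_measureReal_preimage_singleton
    (μ := mu01.restrict ((fun x => idxF hn (σ₁ x)) ⁻¹' {i})) (Finset.univ : Finset (Fin n))
    (f := fun x => idxF hn (σ₂ x)) (fun y _ => n2 (measurableSet_singleton y))
  calc _ = ∑ j, (mu01.restrict ((fun x => idxF hn (σ₁ x)) ⁻¹' {i})).real ((fun x => idxF hn (σ₂ x)) ⁻¹' {j}) := by
        apply Finset.sum_congr rfl; intro j _
        rw [measureReal_restrict_apply (n2 (measurableSet_singleton j))]
        congr 1
        ext x
        simp [and_comm]
    _ = _ := key
    _ = mu01.real ((fun x => idxF hn (σ₁ x)) ⁻¹' {i}) := by simp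
    _ = (mu01.map σ₁).real (idxF hn ⁻¹' {i}) := by
        rw [map_measureReal_apply m1 (measurable_idxF hn (measurableSet_singleton i))]
        rfl
    _ = _ := by rw [e1, mu01_idx]

lemma bar_bound {n : ℕ} (hn : 0 < n) {W : ℝ → ℝ → ℝ} (hW : IsGraphon W) (S T : Set ℝ)
    (hS : MeasurableSet S) (hT : MeasurableSet T) (h : S ⊆ Set.Icc 0 1) (h' : T ⊆ Set.Icc 0 1) :
    |∫ p in S ×ˢ T, (barMat n W (idxF hn p.1) (idxF hn p.2) - W p.1 p.2)| ≤ dCut (barStep n W) W := by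
  have h1 := le_cutNorm (U := fun x y => barStep n W x y - W x y) (C := 1)
    (fun x y => abs_sub_le_one' (barStep_mem hn hW x y) (hW.2.2 x y)) hS hT h h'
  have h2 : ∫ p in S ×ˢ T, (barMat n W (idxF hn p.1) (idxF hn p.2) - W p.1 p.2)
      = ∫ p in S ×ˢ T, (barStep n W p.1 p.2 - W p.1 p.2) := by
    apply int_congr hS hT h h' ae_mu01
    intro x y hx hy
    simp only [bar_step hn W hx hy]
  rw [h2, dCut]
  exact h1

lemma graph_bound {n : ℕ} (hn : 0 < n) {W : ℝ → ℝ → ℝ} (hW : IsGraphon W) (G : SimpleGraph (Fin n))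
    [DecidableRel G.Adj] {σ₁ σ₂ : ℝ → ℝ} (h₁ : IsMPSelf σ₁) (S T : Set ℝ)
    (hS : MeasurableSet S) (hT : MeasurableSet T) (h : S ⊆ Set.Icc 0 1) (h' : T ⊆ Set.Icc 0 1) :
    |∫ p in S ×ˢ T, ((if G.Adj (idxF hn (σ₁ p.1)) (idxF hn (σ₁ p.2)) then (1:ℝ) else 0)
        - W (σ₂ p.1) (σ₂ p.2))|
      ≤ cutNorm (fun x y => graphonOfGraph G (σ₁ x) (σ₁ y) - W (σ₂ x) (σ₂ y)) := by
  have aeσ : ∀ᵐ x ∂mu01, σ₁ x ∈ Set.Ioc (0:ℝ) 1 :=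
    (h₁.1.quasiMeasurePreserving).ae ae_mu01
  have h1 := le_cutNorm (U := fun x y => graphonOfGraph G (σ₁ x) (σ₁ y) - W (σ₂ x) (σ₂ y)) (C := 1)
    (fun x y => abs_sub_le_one' (graphonOfGraph_mem G _ _) (hW.2.2 _ _)) hS hT h h'
  have h2 : ∫ p in S ×ˢ T, ((if G.Adj (idxF hn (σ₁ p.1)) (idxF hn (σ₁ p.2)) then (1:ℝ) else 0)
        - W (σ₂ p.1) (σ₂ p.2))
      = ∫ p in S ×ˢ T, (graphonOfGraph G (σ₁ p.1) (σ₁ p.2) - W (σ₂ p.1) (σ₂ p.2)) := by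
    apply int_congr hS hT h h' aeσ
    intro x y hx hy
    simp only [graphon_step hn G hx hy]
    congr
  rw [h2]
  exact h1

lemma meas_pull {F : ℝ → ℝ → ℝ} (hF : Measurable (fun p : ℝ × ℝ => F p.1 p.2)) {σ : ℝ → ℝ}
    (hσ : Measurable σ) : Measurable (fun p : ℝ × ℝ => F (σ p.1) (σ p.2)) := by
  have h1 : Measurable (fun p : ℝ × ℝ => (σ p.1, σ p.2)) :=
    (hσ.comp measurable_fst).prodMk (hσ.comp measurable_snd)
  exact hF.comp h1

lemma main_perm {n : ℕ} (hn : 0 < n) (hl : 324 ≤ Real.logb 2 (n:ℝ)) {W : ℝ → ℝ → ℝ} (hW : IsGraphon W)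
    (G : SimpleGraph (Fin n)) {σ₁ σ₂ : ℝ → ℝ} (h₁ : IsMPSelf σ₁) (h₂ : IsMPSelf σ₂) :
    ∃ π : Equiv.Perm (Fin n), dCut (graphonOfGraph (G.comap π)) W ≤
      cutNorm (fun x y => graphonOfGraph G (σ₁ x) (σ₁ y) - W (σ₂ x) (σ₂ y))
        + 17 / Real.sqrt (Real.logb 2 (n:ℝ)) + 2 * dCut (barStep n W) W := by
  classical
  obtain ⟨m1, e1⟩ := mp_facts h₁
  obtain ⟨m2, e2⟩ := mp_facts h₂
  have mW : Measurable (fun p : ℝ × ℝ => W p.1 p.2) := hW.2.1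
  have mi := measurable_idxF hn
  set c₀ := cutNorm (fun x y => graphonOfGraph G (σ₁ x) (σ₁ y) - W (σ₂ x) (σ₂ y)) with hc₀
  set d := dCut (barStep n W) W with hd
  let A : Fin n → Fin n → ℝ := fun i k => if G.Adj i k then 1 else 0
  let B : Fin n → Fin n → ℝ := barMat n W
  have hA : ∀ i k, A i k ∈ Set.Icc (0:ℝ) 1 := by
    intro i k; simp only [A]; split_ifs <;> simp
  have hB : ∀ i k, B i k ∈ Set.Icc (0:ℝ) 1 := barMat_mem hW
  have mM := meas_idx2 hn
  -- bound for `B - W`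
  have hBW : ∀ S T : Set ℝ, MeasurableSet S → MeasurableSet T → S ⊆ Set.Icc 0 1 → T ⊆ Set.Icc 0 1 →
      |∫ p in S ×ˢ T, (B (idxF hn p.1) (idxF hn p.2) - W p.1 p.2)| ≤ d := bar_bound hn hW
  have hBWσ : ∀ S T : Set ℝ, MeasurableSet S → MeasurableSet T → S ⊆ Set.Icc 0 1 → T ⊆ Set.Icc 0 1 →
      |∫ p in S ×ˢ T, (B (idxF hn (σ₂ p.1)) (idxF hn (σ₂ p.2)) - W (σ₂ p.1) (σ₂ p.2))| ≤ d :=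
    pullback_le (U := fun p => B (idxF hn p.1) (idxF hn p.2) - W p.1 p.2) ((mM B).sub mW) (C := 1)
      (fun p => abs_sub_le_one' (hB _ _) (hW.2.2 _ _)) hBW h₂
  have hAW : ∀ S T : Set ℝ, MeasurableSet S → MeasurableSet T → S ⊆ Set.Icc 0 1 → T ⊆ Set.Icc 0 1 →
      |∫ p in S ×ˢ T, (A (idxF hn (σ₁ p.1)) (idxF hn (σ₁ p.2)) - W (σ₂ p.1) (σ₂ p.2))| ≤ c₀ := graph_bound hn hW G h₁
  let φ : ℝ → Fin n × Fin n := fun x => (idxF hn (σ₁ x), idxF hn (σ₂ x))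
  have hφ : Measurable φ := (mi.comp m1).prodMk (mi.comp m2)
  have mσ₁ : Measurable (fun p : ℝ × ℝ => A (idxF hn (σ₁ p.1)) (idxF hn (σ₁ p.2))) :=
    meas_pull (F := fun x y => A (idxF hn x) (idxF hn y)) (mM A) m1
  have mσ₂ : Measurable (fun p : ℝ × ℝ => B (idxF hn (σ₂ p.1)) (idxF hn (σ₂ p.2))) :=
    meas_pull (F := fun x y => B (idxF hn x) (idxF hn y)) (mM B) m2
  have mWσ : Measurable (fun p : ℝ × ℝ => W (σ₂ p.1) (σ₂ p.2)) := meas_pull mW m2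
  have hcut : CutLE (fun x y => mu01.real (φ ⁻¹' {x}) * mu01.real (φ ⁻¹' {y}) * (A x.1 y.1 - B x.2 y.2))
      (c₀ + d) := by
    apply cutLE_of_int φ hφ (fun x y => A x.1 y.1 - B x.2 y.2)
    intro S T hS hT h h'
    have t1 := hAW S T hS hT h h'
    have t2 := hBWσ S T hS hT h h'
    have : ∫ p in S ×ˢ T, (A (φ p.1).1 (φ p.2).1 - B (φ p.1).2 (φ p.2).2)
      = (∫ p in S ×ˢ T, (A (idxF hn (σ₁ p.1)) (idxF hn (σ₁ p.2)) - W (σ₂ p.1) (σ₂ p.2)))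
       - ∫ p in S ×ˢ T, (B (idxF hn (σ₂ p.1)) (idxF hn (σ₂ p.2)) - W (σ₂ p.1) (σ₂ p.2)) := by
      rw [vol_restrict_prod hS hT h h', ← integral_sub]
      · congr 1
        ext p
        simp only [φ]; ring
      · exact integrable_bdd (mσ₁.sub mWσ) (C := 1) (fun p => abs_sub_le_one' (hA _ _) (hW.2.2 _ _)) _
      · exact integrable_bdd (mσ₂.sub mWσ) (C := 1) (fun p => abs_sub_le_one' (hB _ _) (hW.2.2 _ _)) _
    rw [this]
    exact (abs_sub _ _).trans (add_le_add t1 t2)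
  obtain ⟨π, hπ⟩ := disc_main hn hl A B hA hB (fun x => mu01.real (φ ⁻¹' {x}))
    (fun x => measureReal_nonneg) (by
      intro i
      rw [fibS_fst]
      exact row_sum hn h₁ h₂ i) (by
      intro i
      rw [fibS_snd, ← row_sum hn h₂ h₁ i]
      apply Finset.sum_congr rfl; intro j _
      congr 1
      ext x
      simp [φ, and_comm]) (c₀ + d) hcut
  exists π
  apply cutNorm_le
  intro S T hS hT h h'
  have t1 := int_of_cutLE hn (fun i k => A (π i) (π k) - B i k) _ hπ hS hT h h'
  have t2 := hBW S T hS hT h h'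
  have : ∫ p in S ×ˢ T, (graphonOfGraph (G.comap π) p.1 p.2 - W p.1 p.2)
      = (∫ p in S ×ˢ T, (A (π (idxF hn p.1)) (π (idxF hn p.2)) - B (idxF hn p.1) (idxF hn p.2)))
       + ∫ p in S ×ˢ T, (B (idxF hn p.1) (idxF hn p.2) - W p.1 p.2) := by
    rw [int_congr (V := fun p => A (π (idxF hn p.1)) (π (idxF hn p.2)) - W p.1 p.2) hS hT h h' ae_mu01 (by
      intro x y hx hy
      simp only [graphon_step hn _ hx hy, A, SimpleGraph.comap_adj])]
    rw [vol_restrict_prod hS hT h h', ← integral_add]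
    · congr 1
      ext p
      ring
    · exact integrable_bdd ((mM fun i k => A (π i) (π k)).sub (mM B)) (C := 1) (fun p => abs_sub_le_one' (hA _ _) (hB _ _)) _
    · exact integrable_bdd ((mM B).sub mW) (C := 1) (fun p => abs_sub_le_one' (hB _ _) (hW.2.2 _ _)) _
  rw [this]
  have t3 := abs_add_le (∫ p in S ×ˢ T, (A (π (idxF hn p.1)) (π (idxF hn p.2)) - B (idxF hn p.1) (idxF hn p.2))) (∫ p in S ×ˢ T, (B (idxF hn p.1) (idxF hn p.2) - W p.1 p.2))
  linarith


lemma perm_exists {W : ℝ → ℝ → ℝ} (hW : IsGraphon W) {n : ℕ} (hn : 2 ≤ n) {δ : ℝ} (hδ : 0 < δ)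
    (G : SimpleGraph (Fin n)) (hG : deltaCut (graphonOfGraph G) W ≤ δ) :
    ∃ π : Equiv.Perm (Fin n), dCut (graphonOfGraph (G.comap π)) W ≤
      δ + (18 / Real.sqrt (Real.logb 2 (n:ℝ)) + 2 * dCut (barStep n W) W) := by
  have hn2 : (2:ℝ) ≤ n := by exact_mod_cast hn
  have hl1 : 1 ≤ Real.logb 2 (n:ℝ) := by
    rw [Real.le_logb_iff_rpow_le (by norm_num) (by linarith)]
    simpa using hn2
  set l := Real.logb 2 (n:ℝ) with hl
  have hs : 0 < Real.sqrt l := Real.sqrt_pos.2 (by linarith)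
  have hd : 0 ≤ dCut (barStep n W) W := cutNorm_nonneg _
  by_cases h : 324 ≤ l
  · have hne : Set.Nonempty { r : ℝ | ∃ σ₁ σ₂ : ℝ → ℝ, IsMPSelf σ₁ ∧ IsMPSelf σ₂ ∧
        r = cutNorm (fun x y => graphonOfGraph G (σ₁ x) (σ₁ y) - W (σ₂ x) (σ₂ y)) } :=
      ⟨_, id, id, ⟨MeasurePreserving.id _, fun x hx => hx⟩, ⟨MeasurePreserving.id _, fun x hx => hx⟩, rfl⟩
    have hlt : deltaCut (graphonOfGraph G) W < δ + 1 / Real.sqrt l :=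
      lt_of_le_of_lt hG (by linarith [show 0 < 1 / Real.sqrt l by positivity])
    obtain ⟨r, ⟨σ₁, σ₂, h1, h2, rfl⟩, hr⟩ := exists_lt_of_csInf_lt hne hlt
    obtain ⟨π, hπ⟩ := main_perm (by omega) h hW G h1 h2
    refine ⟨π, hπ.trans ?_⟩
    have : 18 / Real.sqrt l = 17 / Real.sqrt l + 1 / Real.sqrt l := by ring
    rw [this]; linarith
  · push Not at h
    refine ⟨1, ?_⟩
    have h1 : dCut (graphonOfGraph (G.comap (1 : Equiv.Perm (Fin n)))) W ≤ 1 := by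
      apply cutNorm_le
      intro S T _ _ a b
      exact int_bdd (U := fun p => graphonOfGraph (G.comap (1 : Equiv.Perm (Fin n))) p.1 p.2 - W p.1 p.2)
        (fun p => abs_sub_le_one' (graphonOfGraph_mem _ _ _) (hW.2.2 _ _)) S T a b
    have h2 : Real.sqrt l ≤ 18 := by
      rw [Real.sqrt_le_left (by norm_num)]; linarith
    have h3 : 1 ≤ 18 / Real.sqrt l := by rw [le_div_iff₀ hs]; linarith
    linarith

lemma count_le {W : ℝ → ℝ → ℝ} (hW : IsGraphon W) {n : ℕ} (hn : 2 ≤ n) {δ : ℝ} (hδ : 0 < δ) :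
    NCut n δ W ≤ Nat.factorial n * NhatCut n (δ + (18 / Real.sqrt (Real.logb 2 (n:ℝ)) + 2 * dCut (barStep n W) W)) W := by
  classical
  have key := fun G : {G : SimpleGraph (Fin n) // deltaCut (graphonOfGraph G) W ≤ δ} =>
    perm_exists hW hn hδ G.1 G.2
  choose π hπ using key
  have hfac : Nat.factorial n = Nat.card (Equiv.Perm (Fin n)) := by
    rw [Nat.card_eq_fintype_card, Fintype.card_perm, Fintype.card_fin]
  unfold NCut NhatCut
  rw [hfac, ← Nat.card_prod]
  apply Nat.card_le_card_of_injective (fun G => (π G, ⟨G.1.comap (π G), hπ G⟩))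
  intro G H hGH
  simp only [Prod.mk.injEq, Subtype.mk.injEq] at hGH
  obtain ⟨h1, h2⟩ := hGH
  rw [h1] at h2
  apply Subtype.ext
  ext i k
  have := congrArg (fun K : SimpleGraph (Fin n) => K.Adj ((π H).symm i) ((π H).symm k)) h2
  simpa using this


lemma dCut_le_L1 {U V : ℝ → ℝ → ℝ} (hU : Integrable (fun p : ℝ × ℝ => U p.1 p.2 - V p.1 p.2) (mu01.prod mu01)) :
    dCut U V ≤ ∫ p, |U p.1 p.2 - V p.1 p.2| ∂(mu01.prod mu01) := by
  apply cutNorm_le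
  intro S T hS hT h h'
  rw [vol_restrict_prod hS hT h h', Measure.prod_restrict]
  refine (abs_integral_le_integral_abs).trans ?_
  exact setIntegral_le_integral hU.abs (Filter.Eventually.of_forall fun p => abs_nonneg _)

lemma barMat_ball {n : ℕ} (W : ℝ → ℝ → ℝ) (i j : Fin n) :
    barMat n W i j = ⨍ p in Metric.closedBall
      ((((i:ℕ):ℝ) + 1/2)/n, (((j:ℕ):ℝ) + 1/2)/n) (1 / (2 * n)), W p.1 p.2 := by
  have hn0 : (0:ℝ) < n := by exact_mod_cast i.pos
  unfold barMat
  apply setAverage_congr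
  rw [← closedBall_prod_same, Real.closedBall_eq_Icc, Real.closedBall_eq_Icc, Measure.volume_eq_prod]
  have e : ∀ i : Fin n, Set.Icc ((((i:ℕ):ℝ) + 1/2)/n - 1 / (2 * n)) ((((i:ℕ):ℝ) + 1/2)/n + 1 / (2 * n))
      = Set.Icc (((i : ℕ) : ℝ)/n) ((((i : ℕ) : ℝ) + 1)/n) := by
    intro i
    congr 1 <;> (field_simp; ring)
  rw [e, e]
  exact Measure.set_prod_ae_eq Ioc_ae_eq_Icc Ioc_ae_eq_Icc

lemma bar_tendsto {W : ℝ → ℝ → ℝ} (hW : IsGraphon W) :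
    Filter.Tendsto (fun n : ℕ => dCut (barStep n W) W) Filter.atTop (nhds 0) := by
  have mW : Measurable (fun p : ℝ × ℝ => W p.1 p.2) := hW.2.1
  have hloc : LocallyIntegrable (fun p : ℝ × ℝ => W p.1 p.2) volume := by
    have h1 : LocallyIntegrable (fun _ : ℝ × ℝ => (1:ℝ)) volume := locallyIntegrable_const 1
    refine h1.mono mW.aestronglyMeasurable (Filter.Eventually.of_forall fun p => ?_)
    rw [Real.norm_eq_abs, abs_of_nonneg (hW.2.2 _ _).1]
    simpa using (hW.2.2 p.1 p.2).2
  have hleb := IsUnifLocDoublingMeasure.ae_tendsto_average (μ := (volume : Measure (ℝ × ℝ))) hloc 1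
  have hac : (mu01.prod mu01) ≪ (volume : Measure (ℝ × ℝ)) := by
    rw [mu01, Measure.prod_restrict, Measure.volume_eq_prod]
    exact Measure.absolutelyContinuous_of_le Measure.restrict_le_self
  -- measurable version of the step function
  let g : ℕ → ℝ × ℝ → ℝ := fun n p =>
    if h : 0 < n then barMat n W (idxF h p.1) (idxF h p.2) else 0
  have gm : ∀ n, Measurable (g n) := by
    intro n
    by_cases h : 0 < n
    · simp only [g, h, dif_pos]
      exact meas_idx2 h (barMat n W)
    · simp only [g, h]
      exact measurable_const
  have gmem : ∀ n p, g n p ∈ Set.Icc (0:ℝ) 1 := by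
    intro n p
    by_cases h : 0 < n
    · simp only [g, h, dif_pos]; exact barMat_mem hW _ _
    · simp [g, h]
  have gb : ∀ n p, |(|g n p - W p.1 p.2|)| ≤ 1 := by
    intro n p
    rw [abs_abs]; exact abs_sub_le_one' (gmem n p) (hW.2.2 _ _)
  have ae01 := ae_prod_of_ae ae_mu01 ae_mu01
  have lim : Filter.Tendsto (fun n => ∫ p, |g n p - W p.1 p.2| ∂(mu01.prod mu01)) Filter.atTop
      (nhds (∫ p : ℝ × ℝ, (0:ℝ) ∂(mu01.prod mu01))) := by
    apply tendsto_integral_of_dominated_convergence (fun _ => (1:ℝ))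
    · intro n
      exact (((gm n).sub mW).abs).aestronglyMeasurable
    · exact integrable_const _
    · intro n
      exact Filter.Eventually.of_forall fun p => gb n p
    · filter_upwards [hac.ae_le hleb, ae01] with p hp h01
      have ht : Filter.Tendsto (fun n : ℕ => g n p) Filter.atTop (nhds (W p.1 p.2)) := by
        let w : ℕ → ℝ × ℝ := fun n => if h : 0 < n then
          ((((idxF h p.1:ℕ):ℝ) + 1/2)/n, (((idxF h p.2:ℕ):ℝ) + 1/2)/n) else 0
        have := hp (l := Filter.atTop) w (fun n : ℕ => 1 / (2 * (n:ℝ))) (by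
          rw [tendsto_nhdsWithin_iff]
          constructor
          · have h2 : Filter.Tendsto (fun n : ℕ => 2 * (n:ℝ)) Filter.atTop Filter.atTop :=
              tendsto_natCast_atTop_atTop.const_mul_atTop (by norm_num)
            exact h2.inv_tendsto_atTop.congr (fun n => by simp [one_div])
          · filter_upwards [Filter.eventually_gt_atTop 0] with n hn
            have hn0 : (0:ℝ) < n := by exact_mod_cast hn
            simp only [Set.mem_Ioi]
            positivity) (by
          filter_upwards [Filter.eventually_gt_atTop 0] with n hn
          have hn0 : (0:ℝ) < n := by exact_mod_cast hn
          simp only [w, hn, dif_pos, one_mul]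
          rw [← closedBall_prod_same, Set.mem_prod, Real.closedBall_eq_Icc, Real.closedBall_eq_Icc]
          have e : ∀ x ∈ Set.Ioc (0:ℝ) 1, x ∈ Set.Icc ((((idxF hn x:ℕ):ℝ) + 1/2)/n - 1 / (2 * n))
              ((((idxF hn x:ℕ):ℝ) + 1/2)/n + 1 / (2 * n)) := by
            intro x hx
            have := (idxF_eq_iff hn hx (idxF hn x)).1 rfl
            have e1 : (((idxF hn x:ℕ):ℝ) + 1/2)/n - 1 / (2 * n) = ((idxF hn x:ℕ):ℝ)/n := by
              field_simp; ring
            have e2 : (((idxF hn x:ℕ):ℝ) + 1/2)/n + 1 / (2 * n) = (((idxF hn x:ℕ):ℝ) + 1)/n := by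
              field_simp; ring
            rw [e1, e2]
            exact ⟨this.1.le, this.2⟩
          exact ⟨e _ h01.1, e _ h01.2⟩)
        refine this.congr' ?_
        filter_upwards [Filter.eventually_gt_atTop 0] with n hn
        simp only [w, g, hn, dif_pos]
        rw [barMat_ball]
      have h3 := (ht.sub_const (W p.1 p.2)).abs
      simpa using h3
  simp only [integral_zero] at lim
  refine squeeze_zero' (Filter.Eventually.of_forall fun n => cutNorm_nonneg _) ?_ lim
  filter_upwards [Filter.eventually_gt_atTop 0] with n hn
  have heq : (fun p : ℝ × ℝ => barStep n W p.1 p.2 - W p.1 p.2) =ᵐ[mu01.prod mu01]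
      fun p => g n p - W p.1 p.2 := by
    filter_upwards [ae01] with p hp
    simp only [g, hn, dif_pos]
    rw [bar_step hn W hp.1 hp.2]
  have hInteg : Integrable (fun p : ℝ × ℝ => g n p - W p.1 p.2) (mu01.prod mu01) :=
    integrable_bdd ((gm n).sub mW) (C := 1) (fun p => abs_sub_le_one' (gmem n p) (hW.2.2 _ _)) _
  refine (dCut_le_L1 (hInteg.congr heq.symm)).trans (le_of_eq ?_)
  apply integral_congr_ae
  filter_upwards [heq] with p hp
  rw [hp]

lemma eps_tendsto {W : ℝ → ℝ → ℝ} (hW : IsGraphon W) :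
    Filter.Tendsto
      (fun n : ℕ => 18 / Real.sqrt (Real.logb 2 (n : ℝ)) + 2 * dCut (barStep n W) W)
      Filter.atTop (nhds 0) := by
  have h1 : Filter.Tendsto (fun n : ℕ => Real.sqrt (Real.logb 2 (n : ℝ))) Filter.atTop Filter.atTop :=
    Real.tendsto_sqrt_atTop.comp
      ((Real.tendsto_logb_atTop (by norm_num)).comp tendsto_natCast_atTop_atTop)
  have h2 := h1.const_div_atTop 18
  have h3 := (bar_tendsto hW).const_mul 2
  simpa using h2.add h3


/-- Lemma 4.2: `N_□(n,δ;W) ≤ n! N̂_□(n, δ+ε_n; W)` where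
`ε_n = 18/√(log₂ n) + 2 d_□(W̄_n, W) → 0`. -/
theorem stmt4 (W : ℝ → ℝ → ℝ) (hW : IsGraphon W) :
    (∀ n : ℕ, 2 ≤ n → ∀ δ : ℝ, 0 < δ →
      (NCut n δ W : ℝ) ≤ (Nat.factorial n : ℝ) *
        (NhatCut n (δ + (18 / Real.sqrt (Real.logb 2 (n : ℝ)) +
          2 * dCut (barStep n W) W)) W : ℝ)) ∧
    Filter.Tendsto
      (fun n : ℕ => 18 / Real.sqrt (Real.logb 2 (n : ℝ)) + 2 * dCut (barStep n W) W)
      Filter.atTop (nhds 0) := by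
  refine ⟨fun n hn δ hδ => ?_, eps_tendsto hW⟩
  exact_mod_cast count_le hW hn hδ

end
end

section
/- For every graphon W and every δ > 0, liminf_{n→∞} (log₂ N̂_□(n,δ;W)) / C(n,2) ≥ Ent(W), where C(n,2) = n(n-1)/2. -/
open MeasureTheory Set Filter

noncomputable section

section FiniteProb
set_option linter.unusedSectionVars false
variable {E : Type*} [Fintype E] [DecidableEq E]

def wtB (p : E → ℝ) (e : E) (b : Bool) : ℝ := if b then p e else 1 - p e

def muB (p : E → ℝ) (ω : E → Bool) : ℝ := ∏ e, wtB p e (ω e)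

lemma wtB_nonneg {p : E → ℝ} (hp : ∀ e, p e ∈ Set.Icc (0:ℝ) 1) (e : E) (b : Bool) :
    0 ≤ wtB p e b := by
  have := hp e
  cases b <;> simp [wtB, this.1, this.2]

lemma muB_nonneg {p : E → ℝ} (hp : ∀ e, p e ∈ Set.Icc (0:ℝ) 1) (ω : E → Bool) :
    0 ≤ muB p ω := Finset.prod_nonneg fun e _ => wtB_nonneg hp e _

lemma exp_prod (p : E → ℝ) (g : E → Bool → ℝ) :
    ∑ ω : E → Bool, muB p ω * ∏ e, g e (ω e)
      = ∏ e, (p e * g e true + (1 - p e) * g e false) := by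
  have h := Finset.prod_univ_sum (fun _ : E => (Finset.univ : Finset Bool))
    (fun e b => wtB p e b * g e b)
  rw [Fintype.piFinset_univ] at h
  simp only [muB, ← Finset.prod_mul_distrib]
  rw [← h]
  simp [wtB]

lemma muB_sum (p : E → ℝ) : ∑ ω : E → Bool, muB p ω = 1 := by
  have := exp_prod p (fun _ _ => 1)
  simpa using this

lemma exp_coord (p : E → ℝ) (e : E) (φ : Bool → ℝ) :
    ∑ ω : E → Bool, muB p ω * φ (ω e) = p e * φ true + (1 - p e) * φ false := by
  have := exp_prod p (fun e' b => if e' = e then φ b else 1)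
  simp only [Finset.prod_ite_eq', Finset.mem_univ, if_true] at this
  rw [this, Finset.prod_eq_single e]
  · simp
  · intro b _ hb; simp [hb]
  · simp

lemma entropy_prod {p : E → ℝ} :
    ∑ ω : E → Bool, muB p ω * Real.logb 2 (muB p ω) = - ∑ e, binEnt (p e) := by
  have h1 : ∀ ω : E → Bool, muB p ω * Real.logb 2 (muB p ω)
      = ∑ e, muB p ω * Real.logb 2 (wtB p e (ω e)) := by
    intro ω
    rw [← Finset.mul_sum]
    by_cases h : muB p ω = 0
    · simp [h]
    · congr 1
      rw [muB] at h ⊢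
      rw [Real.logb_prod]
      intro e _
      exact Finset.prod_ne_zero_iff.1 h e (Finset.mem_univ _)
  rw [Finset.sum_congr rfl fun ω _ => h1 ω, Finset.sum_comm, ← Finset.sum_neg_distrib]
  refine Finset.sum_congr rfl fun e _ => ?_
  rw [exp_coord p e (fun b => Real.logb 2 (wtB p e b))]
  simp [wtB, binEnt]
  ring

lemma gibbs {p : E → ℝ} (hp : ∀ e, p e ∈ Set.Icc (0:ℝ) 1) (A : Finset (E → Bool)) :
    ∑ e, binEnt (p e) ≤ 1 + Real.logb 2 (A.card) +
      (∑ ω ∈ Aᶜ, muB p ω) * Fintype.card E := by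
  classical
  set L := Real.logb 2 (A.card : ℝ) with hL
  have hL0 : 0 ≤ L := by
    rcases Nat.eq_zero_or_pos A.card with h | h
    · simp [hL, h]
    · exact Real.logb_nonneg (by norm_num) (by exact_mod_cast h)
  set q : (E → Bool) → ℝ := fun ω => if ω ∈ A then (1/2) * (A.card : ℝ)⁻¹
    else (1/2) * ((2:ℝ) ^ (Fintype.card E))⁻¹ with hq
  have hqpos : ∀ ω, 0 < q ω := by
    intro ω
    simp only [hq]
    split_ifs with h
    · have : 0 < A.card := Finset.card_pos.2 ⟨ω, h⟩
      positivity
    · positivity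
  have hqlog : ∀ ω, Real.logb 2 (q ω) = if ω ∈ A then -1 - L else -1 - (Fintype.card E : ℝ) := by
    intro ω
    simp only [hq]
    split_ifs with h
    · have : 0 < A.card := Finset.card_pos.2 ⟨ω, h⟩
      rw [Real.logb_mul (by norm_num) (by positivity), Real.logb_inv, one_div, Real.logb_inv,
        Real.logb_self_eq_one (by norm_num)]
      ring
    · rw [Real.logb_mul (by norm_num) (by positivity), Real.logb_inv, one_div, Real.logb_inv,
        Real.logb_self_eq_one (by norm_num), Real.logb_pow, Real.logb_self_eq_one (by norm_num)]
      ring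
  have hqsum : ∑ ω, q ω ≤ 1 := by
    have : ∀ ω, q ω ≤ (if ω ∈ A then (1/2) * (A.card : ℝ)⁻¹ else 0)
        + (1/2) * ((2:ℝ) ^ (Fintype.card E))⁻¹ := by
      intro ω
      simp only [hq]
      split_ifs with h
      · have : (0:ℝ) ≤ (1/2) * ((2:ℝ) ^ (Fintype.card E))⁻¹ := by positivity
        linarith
      · simp
    refine (Finset.sum_le_sum fun ω _ => this ω).trans ?_
    rw [Finset.sum_add_distrib, Finset.sum_ite_mem, Finset.univ_inter]
    simp only [Finset.sum_const, nsmul_eq_mul, Finset.card_univ, Fintype.card_fun,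
      Fintype.card_bool]
    have h2 : (((2:ℕ) ^ Fintype.card E : ℕ) : ℝ) * (1 / 2 * ((2:ℝ) ^ Fintype.card E)⁻¹) = 1/2 := by
      push_cast
      field_simp
    have h1 : (A.card : ℝ) * (1 / 2 * (A.card : ℝ)⁻¹) ≤ 1/2 := by
      rcases Nat.eq_zero_or_pos A.card with h | h
      · simp [h]
      · have : (0:ℝ) < A.card := by exact_mod_cast h
        apply le_of_eq
        field_simp
    linarith
  have hlog2 : 0 < Real.log 2 := Real.log_pos (by norm_num)
  have key : ∀ ω, muB p ω * Real.logb 2 (q ω) - muB p ω * Real.logb 2 (muB p ω)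
      ≤ (q ω - muB p ω) / Real.log 2 := by
    intro ω
    rcases (muB_nonneg hp ω).eq_or_lt with h | h
    · rw [← h]
      simp
      exact div_nonneg (hqpos ω).le hlog2.le
    · rw [← mul_sub, ← Real.logb_div (hqpos ω).ne' h.ne', Real.logb, ← mul_div_assoc]
      apply div_le_div_of_nonneg_right _ hlog2.le
      have := Real.log_le_sub_one_of_pos (div_pos (hqpos ω) h)
      calc _ ≤ muB p ω * (q ω / muB p ω - 1) := mul_le_mul_of_nonneg_left this h.le
        _ = _ := by field_simp
  have hs := Finset.sum_le_sum fun ω (_ : ω ∈ (Finset.univ : Finset (E → Bool))) => key ω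
  rw [Finset.sum_sub_distrib, entropy_prod, ← Finset.sum_div, Finset.sum_sub_distrib,
    muB_sum] at hs
  have hs2 : (∑ ω, q ω - 1) / Real.log 2 ≤ 0 :=
    div_nonpos_of_nonpos_of_nonneg (by linarith) hlog2.le
  have hs3 : ∑ ω, muB p ω * Real.logb 2 (q ω) ≥ -1 - L -
      (∑ ω ∈ Aᶜ, muB p ω) * Fintype.card E := by
    have : ∀ ω, muB p ω * Real.logb 2 (q ω) ≥ muB p ω * (-1 - L) -
        (if ω ∈ Aᶜ then muB p ω else 0) * Fintype.card E := by
      intro ω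
      have hm := muB_nonneg hp ω
      rw [hqlog]
      by_cases h : ω ∈ A
      · simp [h]
      · simp [h]
        nlinarith [mul_nonneg hm hL0]
    calc _ ≤ ∑ ω, (muB p ω * (-1 - L) -
        (if ω ∈ Aᶜ then muB p ω else 0) * Fintype.card E) := by
          rw [Finset.sum_sub_distrib, ← Finset.sum_mul, ← Finset.sum_mul, muB_sum,
            Finset.sum_ite_mem, Finset.univ_inter]
          linarith
      _ ≤ _ := Finset.sum_le_sum fun ω _ => this ω
  linarith

lemma fourth_zero (p : E → ℝ) (e₁ e₂ e₃ e₄ : E) (h2 : e₁ ≠ e₂) (h3 : e₁ ≠ e₃) (h4 : e₁ ≠ e₄)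
    (x : E → Bool → ℝ) (hx : ∀ e, p e * x e true + (1 - p e) * x e false = 0) :
    ∑ ω : E → Bool, muB p ω * (x e₁ (ω e₁) * x e₂ (ω e₂) * x e₃ (ω e₃) * x e₄ (ω e₄)) = 0 := by
  have h := exp_prod p (fun e b => (if e = e₁ then x e b else 1) * (if e = e₂ then x e b else 1)
    * (if e = e₃ then x e b else 1) * (if e = e₄ then x e b else 1))
  simp only [Finset.prod_mul_distrib, Finset.prod_ite_eq', Finset.mem_univ, if_true] at h
  rw [h]
  apply Finset.prod_eq_zero (Finset.mem_univ e₁)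
  simp [h2, h3, h4, hx]

end FiniteProb
section Edges
variable {n : ℕ}

abbrev EdgeT (n : ℕ) := {p : Fin n × Fin n // p.1 < p.2}

def mkE (i j : Fin n) (h : i ≠ j) : EdgeT n := ⟨(min i j, max i j), by simpa [eq_comm] using h⟩

lemma mkE_symm (i j : Fin n) (h : i ≠ j) : mkE i j h = mkE j i h.symm := by
  simp [mkE, min_comm, max_comm]

lemma mkE_eq (i j k l : Fin n) (h : i ≠ j) (h' : k ≠ l) (he : mkE i j h = mkE k l h') :
    (i = k ∧ j = l) ∨ (i = l ∧ j = k) := by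
  simp only [mkE, Subtype.mk.injEq, Prod.mk.injEq] at he
  obtain ⟨h1, h2⟩ := he
  rcases le_total i j with a | a <;> rcases le_total k l with b | b <;> simp [a, b] at h1 h2 <;>
    simp [h1, h2]

def grf (ω : EdgeT n → Bool) : SimpleGraph (Fin n) where
  Adj i j := ∃ h : i ≠ j, ω (mkE i j h) = true
  symm := ⟨by
    rintro i j ⟨h, hω⟩
    exact ⟨h.symm, by rwa [← mkE_symm]⟩⟩
  loopless := ⟨by rintro i ⟨h, _⟩; exact h rfl⟩

lemma mkE_self (e : EdgeT n) : mkE e.1.1 e.1.2 e.2.ne = e := by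
  obtain ⟨⟨a, b⟩, h⟩ := e
  simp only at h
  simp [mkE, h.le]

lemma grf_inj : Function.Injective (grf (n := n)) := by
  intro ω ω' h
  funext e
  have h2 : (grf ω).Adj e.1.1 e.1.2 ↔ (grf ω').Adj e.1.1 e.1.2 := by rw [h]
  have h3 : ∀ ω : EdgeT n → Bool, (grf ω).Adj e.1.1 e.1.2 ↔ ω e = true := by
    intro ω
    constructor
    · rintro ⟨h, hω⟩
      rwa [mkE_self] at hω
    · intro h
      exact ⟨e.2.ne, by rwa [mkE_self]⟩
  rw [h3, h3] at h2
  exact Bool.eq_iff_iff.2 h2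

lemma edge_sum (f : Fin n → Fin n → ℝ) (hf : ∀ i j, f i j = f j i) :
    2 * ∑ e : EdgeT n, f e.1.1 e.1.2 = ∑ i, ∑ j, f i j - ∑ i, f i i := by
  have h1 : ∑ e : EdgeT n, f e.1.1 e.1.2 = ∑ i, ∑ j, if i < j then f i j else 0 := by
    rw [← Fintype.sum_prod_type' (f := fun i j => if i < j then f i j else 0),
      ← Finset.sum_filter]
    exact (Finset.sum_subtype _ (by simp) (fun p : Fin n × Fin n => f p.1 p.2)).symm
  have h2 : ∑ i : Fin n, ∑ j, (if i < j then f i j else 0)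
      = ∑ i : Fin n, ∑ j, (if j < i then f i j else 0) := by
    rw [Finset.sum_comm]
    refine Finset.sum_congr rfl fun i _ => Finset.sum_congr rfl fun j _ => ?_
    rw [hf]
  have h3 : ∑ i : Fin n, f i i = ∑ i : Fin n, ∑ j, (if i = j then f i j else 0) := by simp
  rw [two_mul]
  nth_rewrite 2 [h1]
  rw [h1, h2, h3, ← h2]
  nth_rewrite 2 [h2]
  rw [← Finset.sum_add_distrib, ← Finset.sum_sub_distrib]
  refine Finset.sum_congr rfl fun i _ => ?_
  rw [← Finset.sum_add_distrib, ← Finset.sum_sub_distrib]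
  refine Finset.sum_congr rfl fun j _ => ?_
  rcases lt_trichotomy i j with h | h | h
  · simp [h, h.not_gt, h.ne]
  · simp [h]
  · simp [h, h.not_gt, h.ne']

lemma card_edge : (Fintype.card (EdgeT n) : ℝ) = choose2 n := by
  have := edge_sum (n := n) (fun _ _ => 1) (by simp)
  simp at this
  unfold choose2
  linarith

lemma bilin_bound (X : Fin n → Fin n → ℝ) (s t : Fin n → ℝ)
    (hs : ∀ i, s i ∈ Set.Icc (0:ℝ) 1) (ht : ∀ i, t i ∈ Set.Icc (0:ℝ) 1) :
    (∑ i, ∑ j, X i j * s i * t j) ^ 4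
      ≤ (n:ℝ) ^ 4 * ∑ j, ∑ k, (∑ i, X i j * X i k) ^ 2 := by
  set Z : Fin n → Fin n → ℝ := fun j k => ∑ i, X i j * X i k with hZ
  set Y : Fin n → ℝ := fun i => ∑ j, X i j * t j with hY
  have hsq : ∀ {u : ℝ}, u ∈ Set.Icc (0:ℝ) 1 → u ^ 2 ≤ 1 := by
    intro u hu
    have := hu.1; have := hu.2
    nlinarith
  have e1 : ∑ i, ∑ j, X i j * s i * t j = ∑ i, s i * Y i := by
    simp only [hY, Finset.mul_sum]
    refine Finset.sum_congr rfl fun i _ => Finset.sum_congr rfl fun j _ => by ring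
  have e2 : (∑ i, s i * Y i) ^ 2 ≤ n * ∑ i, Y i ^ 2 := by
    refine (Finset.sum_mul_sq_le_sq_mul_sq _ _ _).trans ?_
    apply mul_le_mul_of_nonneg_right _ (Finset.sum_nonneg fun i _ => sq_nonneg _)
    refine (Finset.sum_le_sum fun i _ => hsq (hs i)).trans ?_
    simp
  have e3 : ∑ i, Y i ^ 2 = ∑ q : Fin n × Fin n, (t q.1 * t q.2) * Z q.1 q.2 := by
    rw [Fintype.sum_prod_type]
    simp only [hY, hZ, sq, Finset.sum_mul, Finset.mul_sum]
    rw [Finset.sum_comm]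
    refine Finset.sum_congr rfl fun j _ => ?_
    rw [Finset.sum_comm]
    refine Finset.sum_congr rfl fun k _ => Finset.sum_congr rfl fun i _ => by ring
  have e4 : (∑ i, Y i ^ 2) ^ 2 ≤ (n:ℝ)^2 * ∑ j, ∑ k, Z j k ^ 2 := by
    rw [e3, ← Fintype.sum_prod_type' (f := fun j k => Z j k ^ 2)]
    refine (Finset.sum_mul_sq_le_sq_mul_sq _ _ _).trans ?_
    apply mul_le_mul_of_nonneg_right _ (Finset.sum_nonneg fun i _ => sq_nonneg _)
    refine (Finset.sum_le_sum fun q _ => show (t q.1 * t q.2) ^ 2 ≤ 1 from ?_).trans ?_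
    · rw [mul_pow]
      exact mul_le_one₀ (hsq (ht _)) (sq_nonneg _) (hsq (ht _))
    · simp [sq]
  rw [e1]
  calc (∑ i, s i * Y i) ^ 4 = ((∑ i, s i * Y i) ^ 2) ^ 2 := by ring
    _ ≤ (n * ∑ i, Y i ^ 2) ^ 2 := pow_le_pow_left₀ (sq_nonneg _) e2 2
    _ = (n:ℝ)^2 * (∑ i, Y i ^ 2) ^ 2 := by ring
    _ ≤ (n:ℝ)^2 * ((n:ℝ)^2 * ∑ j, ∑ k, Z j k ^ 2) := by gcongr
    _ = _ := by ring

def xB (P : Fin n → Fin n → ℝ) (e : EdgeT n) (b : Bool) : ℝ :=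
  (if b then 1 else 0) - P e.1.1 e.1.2

def XB (P : Fin n → Fin n → ℝ) (ω : EdgeT n → Bool) (i j : Fin n) : ℝ :=
  if h : i ≠ j then xB P (mkE i j h) (ω (mkE i j h)) else 0

lemma XB_abs {P : Fin n → Fin n → ℝ} (hP : ∀ i j, P i j ∈ Set.Icc (0:ℝ) 1) (ω) (i j) :
    |XB P ω i j| ≤ 1 := by
  unfold XB xB
  split_ifs
  · have h := hP (mkE i j ‹_›).1.1 (mkE i j ‹_›).1.2
    rw [abs_le]; constructor <;> linarith [h.1, h.2]
  · have h := hP (mkE i j ‹_›).1.1 (mkE i j ‹_›).1.2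
    rw [abs_le]; constructor <;> linarith [h.1, h.2]
  · simp

lemma moment4 {P : Fin n → Fin n → ℝ} (hP : ∀ i j, P i j ∈ Set.Icc (0:ℝ) 1) :
    ∑ ω, muB (fun e : EdgeT n => P e.1.1 e.1.2) ω *
      (∑ j, ∑ k, (∑ i, XB P ω i j * XB P ω i k) ^ 2) ≤ 3 * (n:ℝ) ^ 3 := by
  set p : EdgeT n → ℝ := fun e => P e.1.1 e.1.2 with hp
  have hp01 : ∀ e, p e ∈ Set.Icc (0:ℝ) 1 := fun e => hP _ _
  have e1 : ∑ ω, muB p ω * (∑ j, ∑ k, (∑ i, XB P ω i j * XB P ω i k) ^ 2)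
      = ∑ j, ∑ k, ∑ i, ∑ l, ∑ ω, muB p ω *
        (XB P ω i j * XB P ω i k * XB P ω l j * XB P ω l k) := by
    simp only [sq, Finset.sum_mul, Finset.mul_sum]
    rw [Finset.sum_comm]
    refine Finset.sum_congr rfl fun j _ => ?_
    rw [Finset.sum_comm]
    refine Finset.sum_congr rfl fun k _ => ?_
    rw [Finset.sum_comm]
    refine Finset.sum_congr rfl fun i _ => ?_
    rw [Finset.sum_comm]
    refine Finset.sum_congr rfl fun l _ => Finset.sum_congr rfl fun ω _ => by ring
  have e2 : ∀ j k i l : Fin n, ∑ ω, muB p ω *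
        (XB P ω i j * XB P ω i k * XB P ω l j * XB P ω l k)
      ≤ (if i = l then 1 else 0) + (if j = k then 1 else 0) + (if i = k then 1 else 0) := by
    intro j k i l
    have triv : ∑ ω, muB p ω * (XB P ω i j * XB P ω i k * XB P ω l j * XB P ω l k) ≤ 1 := by
      rw [← muB_sum p]
      refine Finset.sum_le_sum fun ω _ => ?_
      apply mul_le_of_le_one_right (muB_nonneg hp01 ω)
      refine (le_abs_self _).trans ?_
      rw [abs_mul, abs_mul, abs_mul]
      have a := XB_abs hP ω
      exact mul_le_one₀ (mul_le_one₀ (mul_le_one₀ (a _ _) (abs_nonneg _) (a _ _))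
        (abs_nonneg _) (a _ _)) (abs_nonneg _) (a _ _)
    by_cases h1 : i = l
    · rw [if_pos h1]
      have : (0:ℝ) ≤ if j = k then 1 else 0 := by split_ifs <;> norm_num
      have : (0:ℝ) ≤ if i = k then 1 else 0 := by split_ifs <;> norm_num
      linarith
    by_cases h2 : j = k
    · rw [if_pos h2, if_neg h1]
      have : (0:ℝ) ≤ if i = k then 1 else 0 := by split_ifs <;> norm_num
      linarith
    by_cases h3 : i = k
    · rw [if_pos h3, if_neg h1, if_neg h2]
      linarith
    rw [if_neg h1, if_neg h2, if_neg h3]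
    by_cases a1 : i ≠ j
    swap
    · simp [XB, a1]
    by_cases a3 : l ≠ j
    swap
    · simp [XB, a3]
    by_cases a4 : l ≠ k
    swap
    · simp [XB, a4]
    have a2 : i ≠ k := h3
    simp only [XB, dif_pos a1, dif_pos a2, dif_pos a3, dif_pos a4]
    rw [fourth_zero p (mkE i j a1) (mkE i k a2) (mkE l j a3) (mkE l k a4) _ _ _ (xB P)]
    · simp
    · intro e
      simp [xB, hp]
      ring
    · intro he
      rcases mkE_eq _ _ _ _ _ _ he with h | h
      · exact h2 h.2
      · exact h3 h.1
    · intro he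
      rcases mkE_eq _ _ _ _ _ _ he with h | h
      · exact h1 h.1
      · exact a1 h.1
    · intro he
      rcases mkE_eq _ _ _ _ _ _ he with h | h
      · exact h1 h.1
      · exact h3 h.1
  rw [e1]
  calc _ ≤ ∑ j : Fin n, ∑ k : Fin n, ∑ i : Fin n, ∑ l : Fin n,
      (((if i = l then 1 else 0) + (if j = k then 1 else 0) + (if i = k then 1 else 0)) : ℝ) := by
        gcongr with j _ k _ i _ l _
        exact e2 j k i l
    _ = 3 * (n:ℝ) ^ 3 := by
        simp [Finset.sum_add_distrib]
        ring
    _ ≤ _ := le_rfl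

lemma markov4 {P : Fin n → Fin n → ℝ} (hP : ∀ i j, P i j ∈ Set.Icc (0:ℝ) 1) (c : ℝ)
    (hc : 0 < c) (A : Finset (EdgeT n → Bool))
    (hA : ∀ ω, ω ∉ A → c ≤ ∑ j, ∑ k, (∑ i, XB P ω i j * XB P ω i k) ^ 2) :
    ∑ ω ∈ Aᶜ, muB (fun e : EdgeT n => P e.1.1 e.1.2) ω ≤ 3 * (n:ℝ) ^ 3 / c := by
  rw [le_div_iff₀ hc]
  refine le_trans ?_ (moment4 hP)
  have hm := muB_nonneg (p := fun e : EdgeT n => P e.1.1 e.1.2) (fun e => hP _ _)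
  rw [Finset.sum_mul]
  calc _ ≤ ∑ ω ∈ Aᶜ, muB (fun e : EdgeT n => P e.1.1 e.1.2) ω *
      (∑ j, ∑ k, (∑ i, XB P ω i j * XB P ω i k) ^ 2) := by
        refine Finset.sum_le_sum fun ω hω => ?_
        exact mul_le_mul_of_nonneg_left (hA ω (by simpa using hω)) (hm ω)
    _ ≤ _ := by
        apply Finset.sum_le_sum_of_subset_of_nonneg (Finset.subset_univ _)
        intro ω _ _
        exact mul_nonneg (hm ω) (Finset.sum_nonneg fun _ _ => Finset.sum_nonneg fun _ _ => sq_nonneg _)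

end Edges
section Blocks

def Iv (n : ℕ) (i : Fin n) : Set ℝ := Set.Ioc (((i : ℕ) : ℝ)/n) ((((i : ℕ) : ℝ) + 1)/n)

variable {n : ℕ}

lemma Iv_meas (i : Fin n) : MeasurableSet (Iv n i) := measurableSet_Ioc

lemma npos (i : Fin n) : (0:ℝ) < n := by
  have := i.pos
  exact_mod_cast this

lemma mem_Iv (i : Fin n) (x : ℝ) : x ∈ Iv n i ↔ ⌈(n:ℝ) * x⌉ = ((i : ℕ) : ℤ) + 1 := by
  have hn := npos i
  rw [Int.ceil_eq_iff, Iv, Set.mem_Ioc, div_lt_iff₀ hn, le_div_iff₀ hn]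
  push_cast
  rw [add_sub_cancel_right, mul_comm]

lemma Iv_disj {i j : Fin n} {x : ℝ} (h : x ∈ Iv n i) (h' : x ∈ Iv n j) : i = j := by
  rw [mem_Iv] at h h'
  ext
  omega

lemma Iv_sub (i : Fin n) : Iv n i ⊆ Set.Ioc 0 1 := by
  intro x hx
  have hn := npos i
  have hi : ((i:ℕ):ℝ) + 1 ≤ n := by exact_mod_cast i.2
  refine ⟨lt_of_le_of_lt (by positivity) hx.1, hx.2.trans ?_⟩
  rw [div_le_one hn]
  exact hi

lemma Iv_cover (hn : 0 < n) {x : ℝ} (hx : x ∈ Set.Ioc (0:ℝ) 1) : ∃ i, x ∈ Iv n i := by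
  have hn' : (0:ℝ) < n := by exact_mod_cast hn
  have h1 : 0 < ⌈(n:ℝ) * x⌉ := Int.ceil_pos.2 (mul_pos hn' hx.1)
  have h2 : ⌈(n:ℝ) * x⌉ ≤ n := Int.ceil_le.2 (by
    push_cast
    nlinarith [hx.2])
  refine ⟨⟨(⌈(n:ℝ) * x⌉ - 1).toNat, by omega⟩, ?_⟩
  rw [mem_Iv]
  simp only
  omega

lemma Iv_vol (i : Fin n) : (volume : Measure ℝ).real (Iv n i) = 1 / n := by
  have hn := npos i
  rw [Iv, Real.volume_real_Ioc_of_le]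
  · field_simp; ring
  · gcongr; linarith

lemma blk_vol (i j : Fin n) :
    (volume : Measure (ℝ × ℝ)).real (Iv n i ×ˢ Iv n j) = 1 / (n:ℝ)^2 := by
  rw [Measure.volume_eq_prod, measureReal_prod_prod, Iv_vol, Iv_vol]
  have := npos i
  field_simp

lemma block_sum (hn : 0 < n) (F : ℝ × ℝ → ℝ) {S T : Set ℝ} (hS : MeasurableSet S)
    (hT : MeasurableSet T) (hS1 : S ⊆ Set.Icc 0 1) (hT1 : T ⊆ Set.Icc 0 1)
    (hF : IntegrableOn F (S ×ˢ T)) :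
    ∫ p in S ×ˢ T, F p = ∑ i, ∑ j, ∫ p in (S ∩ Iv n i) ×ˢ (T ∩ Iv n j), F p := by
  have hae : ∀ {R : Set ℝ}, R ⊆ Set.Icc 0 1 → R =ᵐ[volume] (R ∩ Set.Ioc 0 1 : Set ℝ) := by
    intro R hR
    have : (R ∩ Set.Icc 0 1 : Set ℝ) =ᵐ[volume] (R ∩ Set.Ioc 0 1 : Set ℝ) :=
      ae_eq_set_inter (ae_eq_refl _) Ioc_ae_eq_Icc.symm
    rwa [Set.inter_eq_left.2 hR] at this
  have h1 : (S ×ˢ T : Set (ℝ × ℝ)) =ᵐ[volume]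
      ((S ∩ Set.Ioc 0 1) ×ˢ (T ∩ Set.Ioc 0 1) : Set (ℝ × ℝ)) := by
    rw [Measure.volume_eq_prod]
    exact Measure.set_prod_ae_eq (hae hS1) (hae hT1)
  have h2 : ((S ∩ Set.Ioc 0 1) ×ˢ (T ∩ Set.Ioc 0 1) : Set (ℝ × ℝ))
      = ⋃ q : Fin n × Fin n, (S ∩ Iv n q.1) ×ˢ (T ∩ Iv n q.2) := by
    ext ⟨x, y⟩
    simp only [Set.mem_prod, Set.mem_inter_iff, Set.mem_iUnion, Prod.exists]
    constructor
    · rintro ⟨⟨a, b⟩, c, d⟩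
      obtain ⟨i, hi⟩ := Iv_cover hn b
      obtain ⟨j, hj⟩ := Iv_cover hn d
      exact ⟨i, j, ⟨a, hi⟩, c, hj⟩
    · rintro ⟨i, j, ⟨a, b⟩, c, d⟩
      exact ⟨⟨a, Iv_sub i b⟩, c, Iv_sub j d⟩
  rw [setIntegral_congr_set h1, h2, integral_iUnion_fintype, Fintype.sum_prod_type]
  · intro q
    exact (hS.inter (Iv_meas _)).prod (hT.inter (Iv_meas _))
  · intro q q' hne
    rw [Function.onFun, Set.disjoint_left]
    rintro ⟨x, y⟩ ⟨a, b⟩ ⟨c, d⟩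
    exact hne (Prod.ext (Iv_disj a.2 c.2) (Iv_disj b.2 d.2))
  · intro q
    exact hF.mono_set (Set.prod_mono Set.inter_subset_left Set.inter_subset_left)

lemma block_sum_full (hn : 0 < n) (F : ℝ × ℝ → ℝ)
    (hF : IntegrableOn F (Set.Icc 0 1 ×ˢ Set.Icc 0 1)) :
    ∫ p in Set.Icc 0 1 ×ˢ Set.Icc 0 1, F p = ∑ i, ∑ j, ∫ p in Iv n i ×ˢ Iv n j, F p := by
  rw [block_sum hn F measurableSet_Icc measurableSet_Icc subset_rfl subset_rfl hF]
  have : ∀ i : Fin n, Set.Icc 0 1 ∩ Iv n i = Iv n i := fun i =>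
    Set.inter_eq_right.2 ((Iv_sub i).trans Set.Ioc_subset_Icc_self)
  simp only [this]

lemma intOn_bdd (F : ℝ × ℝ → ℝ) (hF : Measurable F) (M : ℝ) (hM : ∀ q, |F q| ≤ M) {s : Set (ℝ × ℝ)}
    (hs : s ⊆ Set.Icc 0 1 ×ˢ Set.Icc 0 1) : IntegrableOn F s := by
  have hfin : (volume : Measure (ℝ × ℝ)) s ≠ ⊤ := by
    refine ((measure_mono hs).trans_lt ?_).ne
    rw [Measure.volume_eq_prod, Measure.prod_prod]
    simp
  exact Measure.integrableOn_of_bounded hfin hF.aestronglyMeasurable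
    (M := M) (Filter.Eventually.of_forall fun q => by simpa using hM q)

lemma blk_sub (i j : Fin n) : Iv n i ×ˢ Iv n j ⊆ Set.Icc (0:ℝ) 1 ×ˢ Set.Icc (0:ℝ) 1 :=
  Set.prod_mono ((Iv_sub i).trans Set.Ioc_subset_Icc_self)
    ((Iv_sub j).trans Set.Ioc_subset_Icc_self)

def pavg (n : ℕ) (W : ℝ → ℝ → ℝ) (i j : Fin n) : ℝ :=
  (n:ℝ)^2 * ∫ q in Iv n i ×ˢ Iv n j, W q.1 q.2

variable {W : ℝ → ℝ → ℝ}

lemma W_meas (hW : IsGraphon W) : Measurable (fun q : ℝ × ℝ => W q.1 q.2) := hW.2.1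

lemma W_intOn (hW : IsGraphon W) {s : Set (ℝ × ℝ)}
    (hs : s ⊆ Set.Icc 0 1 ×ˢ Set.Icc 0 1) : IntegrableOn (fun q : ℝ × ℝ => W q.1 q.2) s :=
  intOn_bdd _ (W_meas hW) 1 (fun q => by
    have := hW.2.2 q.1 q.2
    rw [abs_of_nonneg this.1]; exact this.2) hs

lemma pavg_symm (hW : IsGraphon W) (i j : Fin n) : pavg n W i j = pavg n W j i := by
  unfold pavg
  congr 1
  rw [Measure.volume_eq_prod, ← setIntegral_prod_swap]
  simp only [Prod.fst_swap, Prod.snd_swap]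
  congr 1
  funext q
  exact hW.1 _ _

lemma blk_int_eq (i j : Fin n) :
    ∫ q in Iv n i ×ˢ Iv n j, W q.1 q.2 = (1 / (n:ℝ)^2) * pavg n W i j := by
  have := npos i
  unfold pavg
  field_simp

lemma pavg_mem (hW : IsGraphon W) (i j : Fin n) : pavg n W i j ∈ Set.Icc (0:ℝ) 1 := by
  have hn := npos i
  constructor
  · exact mul_nonneg (by positivity) (integral_nonneg fun q => (hW.2.2 _ _).1)
  · have h : ∫ q in Iv n i ×ˢ Iv n j, W q.1 q.2 ≤ ∫ q in Iv n i ×ˢ Iv n j, (1:ℝ) := by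
      apply integral_mono (W_intOn hW (blk_sub i j))
        (intOn_bdd _ measurable_const 1 (by simp) (blk_sub i j))
      intro q
      exact (hW.2.2 _ _).2
    rw [setIntegral_const, blk_vol, blk_int_eq] at h
    simp only [smul_eq_mul, mul_one] at h
    have h2 : (0:ℝ) < 1 / (n:ℝ)^2 := by positivity
    exact le_of_mul_le_mul_left (by linarith) h2

lemma binEnt_eq : binEnt = fun x => (Real.log 2)⁻¹ * Real.binEntropy x := by
  funext x
  simp only [binEnt, Real.binEntropy, Real.logb, Real.log_inv]
  ring

lemma binEnt_cont : Continuous binEnt := by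
  rw [binEnt_eq]
  exact continuous_const.mul Real.binEntropy_continuous

lemma binEnt_nonneg {x : ℝ} (hx : x ∈ Set.Icc (0:ℝ) 1) : 0 ≤ binEnt x := by
  rw [binEnt_eq]
  exact mul_nonneg (inv_nonneg.2 (Real.log_nonneg (by norm_num)))
    (Real.binEntropy_nonneg hx.1 hx.2)

lemma binEnt_le_one (x : ℝ) : binEnt x ≤ 1 := by
  rw [binEnt_eq]
  have h : 0 < Real.log 2 := Real.log_pos (by norm_num)
  rw [inv_mul_le_iff₀ h, mul_one]
  exact Real.binEntropy_le_log_two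

lemma binEnt_concave : ConcaveOn ℝ (Set.Icc 0 1) binEnt := by
  rw [binEnt_eq]
  exact Real.strictConcave_binEntropy.concaveOn.smul
    (inv_nonneg.2 (Real.log_nonneg (by norm_num)))

lemma binEnt_W_intOn (hW : IsGraphon W) {s : Set (ℝ × ℝ)}
    (hs : s ⊆ Set.Icc 0 1 ×ˢ Set.Icc 0 1) :
    IntegrableOn (fun q : ℝ × ℝ => binEnt (W q.1 q.2)) s :=
  intOn_bdd _ (binEnt_cont.measurable.comp (W_meas hW)) 1 (fun q => by
    simp only [Function.comp]
    rw [abs_of_nonneg (binEnt_nonneg (hW.2.2 _ _))]; exact binEnt_le_one _) hs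

lemma jensen_blk (hW : IsGraphon W) (i j : Fin n) :
    ∫ q in Iv n i ×ˢ Iv n j, binEnt (W q.1 q.2) ≤ (1 / (n:ℝ)^2) * binEnt (pavg n W i j) := by
  have hn := npos i
  have hv := blk_vol i j
  have hv0 : (0:ℝ) < 1 / (n:ℝ)^2 := by positivity
  have h0 : (volume : Measure (ℝ × ℝ)) (Iv n i ×ˢ Iv n j) ≠ 0 := by
    intro h
    rw [Measure.real, h] at hv
    simp only [ENNReal.toReal_zero, ENNReal.toReal_top] at hv
    linarith
  have ht : (volume : Measure (ℝ × ℝ)) (Iv n i ×ˢ Iv n j) ≠ ⊤ := by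
    intro h
    rw [Measure.real, h] at hv
    simp only [ENNReal.toReal_zero, ENNReal.toReal_top] at hv
    linarith
  have := binEnt_concave.le_map_set_average binEnt_cont.continuousOn isClosed_Icc h0 ht
    (f := fun q : ℝ × ℝ => W q.1 q.2)
    (Filter.Eventually.of_forall fun q => hW.2.2 _ _) (W_intOn hW (blk_sub i j))
    (binEnt_W_intOn hW (blk_sub i j))
  rw [setAverage_eq, setAverage_eq, hv] at this
  simp only [smul_eq_mul, one_div, inv_inv] at this
  have e : (n:ℝ) ^ 2 * ∫ q in Iv n i ×ˢ Iv n j, W q.1 q.2 = pavg n W i j := rfl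
  rw [e] at this
  rw [one_div, ← div_eq_inv_mul, le_div_iff₀ (by positivity), mul_comm]
  exact this

lemma ent_le (hW : IsGraphon W) (hn : 0 < n) :
    (n:ℝ)^2 * graphonEnt W ≤ ∑ i, ∑ j, binEnt (pavg n W i j) := by
  have hn' : (0:ℝ) < n := by exact_mod_cast hn
  have h1 : graphonEnt W
      = ∫ q in Set.Icc (0:ℝ) 1 ×ˢ Set.Icc (0:ℝ) 1, binEnt (W q.1 q.2) := by
    rw [Measure.volume_eq_prod, setIntegral_prod]
    · rfl
    · exact binEnt_W_intOn hW subset_rfl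
  rw [h1, block_sum_full hn _ (binEnt_W_intOn hW subset_rfl)]
  have : ∑ i : Fin n, ∑ j : Fin n, ∫ q in Iv n i ×ˢ Iv n j, binEnt (W q.1 q.2)
      ≤ (1 / (n:ℝ)^2) * ∑ i, ∑ j, binEnt (pavg n W i j) := by
    simp only [Finset.mul_sum]
    gcongr with i _ j _
    simpa only [Finset.mul_sum] using jensen_blk hW i j
  rw [one_div, ← div_eq_inv_mul, le_div_iff₀ (by positivity), mul_comm] at this
  exact this

end Blocks
section Approx
variable {W : ℝ → ℝ → ℝ}

def L1err (n : ℕ) (W : ℝ → ℝ → ℝ) : ℝ :=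
  ∑ i, ∑ j, ∫ q in Iv n i ×ˢ Iv n j, |pavg n W i j - W q.1 q.2|

lemma L1_small (hW : IsGraphon W) {ε : ℝ} (hε : 0 < ε) :
    ∀ᶠ n : ℕ in Filter.atTop, L1err n W ≤ ε := by
  set Q : Set (ℝ × ℝ) := Set.Icc (0:ℝ) 1 ×ˢ Set.Icc (0:ℝ) 1 with hQ
  have hQm : MeasurableSet Q := measurableSet_Icc.prod measurableSet_Icc
  set f : ℝ × ℝ → ℝ := Q.indicator (fun q => W q.1 q.2) with hf
  have hfi : Integrable f := (integrable_indicator_iff hQm).2 (W_intOn hW subset_rfl)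
  obtain ⟨g, hgs, hg, hgc, hgi⟩ := hfi.exists_hasCompactSupport_integral_sub_le
    (show 0 < ε / 4 by positivity)
  have hu := hgs.uniformContinuous_of_continuous hgc
  rw [Metric.uniformContinuous_iff] at hu
  obtain ⟨d, hd, hu⟩ := hu (ε / 4) (by positivity)
  obtain ⟨N, hN⟩ := exists_nat_gt (1 / d)
  filter_upwards [Filter.eventually_ge_atTop (max N 1)] with n hnN
  have hn : 0 < n := lt_of_lt_of_le one_pos ((le_max_right _ _).trans hnN)
  have hn' : (0:ℝ) < n := by exact_mod_cast hn
  have hnd : 1 / (n:ℝ) < d := by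
    have : (N:ℝ) ≤ n := by exact_mod_cast (le_max_left _ _).trans hnN
    rw [div_lt_iff₀ hn']
    rw [div_lt_iff₀ hd] at hN
    nlinarith
  have hFi : Integrable (fun q => |f q - g q|) := (hfi.sub hgi).abs
  have hblk : ∀ i j : Fin n, ∫ q in Iv n i ×ˢ Iv n j, |pavg n W i j - W q.1 q.2|
      ≤ 2 * (∫ q in Iv n i ×ˢ Iv n j, |f q - g q|) + 2 * (1 / (n:ℝ)^2 * (ε/4)) := by
    intro i j
    set B := Iv n i ×ˢ Iv n j with hB
    have hBm : MeasurableSet B := (Iv_meas i).prod (Iv_meas j)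
    have hBQ : B ⊆ Q := blk_sub i j
    set c := g ((((i:ℕ):ℝ)+1)/n, (((j:ℕ):ℝ)+1)/n) with hc
    have hconst : ∀ a : ℝ, IntegrableOn (fun _ : ℝ × ℝ => a) B := fun a =>
      intOn_bdd _ measurable_const |a| (fun _ => le_rfl) hBQ
    have hWi := W_intOn hW hBQ
    have habs : IntegrableOn (fun q : ℝ × ℝ => |c - W q.1 q.2|) B := ((hconst c).sub hWi).abs
    have hclose : ∀ k : Fin n, ∀ x ∈ Iv n k, dist x ((((k:ℕ):ℝ)+1)/n) < d := by
      intro k x hx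
      rw [Real.dist_eq, abs_lt]
      have h1 := hx.1
      have h2 := hx.2
      have h3 : (((k:ℕ):ℝ)+1)/n = ((k:ℕ):ℝ)/n + 1/n := by ring
      constructor <;> linarith
    have hpt : ∀ q ∈ B, |c - W q.1 q.2| ≤ |f q - g q| + ε/4 := by
      intro q hq
      have h1 : f q = W q.1 q.2 := Set.indicator_of_mem (hBQ hq) _
      have h2 : dist (g q) c < ε / 4 := by
        apply hu
        rw [Prod.dist_eq]
        exact max_lt (hclose i _ hq.1) (hclose j _ hq.2)
      rw [Real.dist_eq] at h2
      rw [← h1]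
      calc |c - f q| = |-(f q - g q) + -(g q - c)| := by congr 1; ring
        _ ≤ |-(f q - g q)| + |-(g q - c)| := abs_add_le _ _
        _ ≤ _ := by rw [abs_neg, abs_neg]; linarith
    have hI1 : ∫ q in B, |c - W q.1 q.2| ≤ (∫ q in B, |f q - g q|) + 1 / (n:ℝ)^2 * (ε/4) := by
      calc _ ≤ ∫ q in B, (|f q - g q| + ε/4) :=
            setIntegral_mono_on ((hconst c).sub hWi).abs (hFi.integrableOn.add (hconst _)) hBm hpt
        _ = _ := by
            rw [integral_add hFi.integrableOn (hconst _), setIntegral_const, blk_vol, smul_eq_mul]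
    have hI2 : 1 / (n:ℝ)^2 * |pavg n W i j - c| ≤ ∫ q in B, |c - W q.1 q.2| := by
      have e : ∫ q in B, (c - W q.1 q.2) = 1 / (n:ℝ)^2 * (c - pavg n W i j) := by
        rw [integral_sub (hconst c) hWi, setIntegral_const, blk_vol, blk_int_eq, smul_eq_mul]
        ring
      calc _ = |∫ q in B, (c - W q.1 q.2)| := by
            rw [e, abs_mul, abs_sub_comm, abs_of_pos (by positivity : (0:ℝ) < 1 / (n:ℝ)^2)]
        _ ≤ _ := abs_integral_le_integral_abs
    have hI3 : ∫ q in B, |pavg n W i j - W q.1 q.2|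
        ≤ 1 / (n:ℝ)^2 * |pavg n W i j - c| + ∫ q in B, |c - W q.1 q.2| := by
      calc _ ≤ ∫ q in B, (|pavg n W i j - c| + |c - W q.1 q.2|) := by
            apply setIntegral_mono_on ((hconst _).sub hWi).abs
              ((hconst _).add ((hconst c).sub hWi).abs) hBm
            intro q _
            exact abs_sub_le _ _ _
        _ = _ := by
            rw [integral_add (hconst _) habs, setIntegral_const, blk_vol,
              smul_eq_mul]
    linarith
  have hsum : ∑ i : Fin n, ∑ j : Fin n, ∫ q in Iv n i ×ˢ Iv n j, |f q - g q| ≤ ε / 4 := by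
    rw [← block_sum_full hn _ hFi.integrableOn]
    refine le_trans (setIntegral_le_integral hFi
      (Filter.Eventually.of_forall fun q => abs_nonneg _)) ?_
    simpa only [Real.norm_eq_abs] using hg
  unfold L1err
  calc _ ≤ ∑ i : Fin n, ∑ j : Fin n, (2 * (∫ q in Iv n i ×ˢ Iv n j, |f q - g q|)
        + 2 * (1 / (n:ℝ)^2 * (ε/4))) := by
        gcongr with i _ j _
        exact hblk i j
    _ = 2 * (∑ i : Fin n, ∑ j : Fin n, ∫ q in Iv n i ×ˢ Iv n j, |f q - g q|) + ε / 2 := by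
        simp only [Finset.sum_add_distrib, Finset.mul_sum]
        simp
        field_simp
        ring
    _ ≤ ε := by linarith

lemma graphon_blk {n : ℕ} (G : SimpleGraph (Fin n)) (i j : Fin n) {x y : ℝ} (hx : x ∈ Iv n i)
    (hy : y ∈ Iv n j) [Decidable (G.Adj i j)] :
    graphonOfGraph G x y = if G.Adj i j then 1 else 0 := by
  have : (∃ i j : Fin n, G.Adj i j ∧ ⌈(n : ℝ) * x⌉ = ((i : ℕ) : ℤ) + 1 ∧
      ⌈(n : ℝ) * y⌉ = ((j : ℕ) : ℤ) + 1) ↔ G.Adj i j := by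
    constructor
    · rintro ⟨i', j', h, hi, hj⟩
      rw [← mem_Iv] at hi hj
      rw [Iv_disj hx hi, Iv_disj hy hj]
      exact h
    · intro h
      exact ⟨i, j, h, (mem_Iv _ _).1 hx, (mem_Iv _ _).1 hy⟩
  unfold graphonOfGraph
  simp only [this]

lemma graphon_meas {n : ℕ} (G : SimpleGraph (Fin n)) :
    Measurable (fun q : ℝ × ℝ => graphonOfGraph G q.1 q.2) := by
  unfold graphonOfGraph
  refine Measurable.ite ?_ measurable_const measurable_const
  have : {q : ℝ × ℝ | ∃ i j : Fin n, G.Adj i j ∧ ⌈(n : ℝ) * q.1⌉ = ((i : ℕ) : ℤ) + 1 ∧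
      ⌈(n : ℝ) * q.2⌉ = ((j : ℕ) : ℤ) + 1}
      = ⋃ i : Fin n, ⋃ j : Fin n, ⋃ _ : G.Adj i j, Iv n i ×ˢ Iv n j := by
    ext q
    simp only [Set.mem_ofPred_eq, Set.mem_iUnion, Set.mem_prod, mem_Iv, exists_prop]
  rw [this]
  exact MeasurableSet.iUnion fun i => MeasurableSet.iUnion fun j => MeasurableSet.iUnion fun _ =>
    (Iv_meas i).prod (Iv_meas j)

lemma graphon_abs {n : ℕ} (G : SimpleGraph (Fin n)) (x y : ℝ) : |graphonOfGraph G x y| ≤ 1 := by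
  unfold graphonOfGraph
  split_ifs <;> simp

lemma adj_sub {n : ℕ} (hW : IsGraphon W) (ω : EdgeT n → Bool) (i j : Fin n)
    [Decidable ((grf ω).Adj i j)] :
    (if (grf ω).Adj i j then (1:ℝ) else 0) - pavg n W i j
      = XB (pavg n W) ω i j + (if i = j then - pavg n W i j else 0) := by
  by_cases h : i = j
  · subst h
    simp [XB]
  · have hP : pavg n W (mkE i j h).1.1 (mkE i j h).1.2 = pavg n W i j := by
      simp only [mkE]
      rcases le_total i j with hl | hl
      · simp [hl]
      · simp only [hl, min_eq_right, max_eq_left]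
        exact pavg_symm hW _ _
    have hA : (grf ω).Adj i j ↔ ω (mkE i j h) = true :=
      ⟨fun ⟨_, h⟩ => h, fun h' => ⟨h, h'⟩⟩
    simp [XB, h, xB, hP, hA]

lemma cut_bound {n : ℕ} (hn : 0 < n) (hW : IsGraphon W) (ω : EdgeT n → Bool) {η : ℝ} (hη : 0 ≤ η)
    (hZ : ∑ j, ∑ k, (∑ i, XB (pavg n W) ω i j * XB (pavg n W) ω i k) ^ 2 ≤ η ^ 4 * (n:ℝ) ^ 4) :
    dCut (graphonOfGraph (grf ω)) W ≤ η + 1 / n + L1err n W := by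
  classical
  have hn' : (0:ℝ) < n := by exact_mod_cast hn
  have hn2 : (0:ℝ) < 1 / (n:ℝ)^2 := by positivity
  set X := XB (pavg n W) ω with hX
  unfold dCut cutNorm
  apply csSup_le
  · exact ⟨_, ∅, ∅, MeasurableSet.empty, MeasurableSet.empty, Set.empty_subset _,
      Set.empty_subset _, rfl⟩
  rintro r ⟨S, T, hS, hT, hS1, hT1, rfl⟩
  have hsub : ∀ i j : Fin n, (S ∩ Iv n i) ×ˢ (T ∩ Iv n j) ⊆ Iv n i ×ˢ Iv n j := fun i j =>
    Set.prod_mono Set.inter_subset_right Set.inter_subset_right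
  have hGWi : ∀ {s : Set (ℝ × ℝ)}, s ⊆ Set.Icc 0 1 ×ˢ Set.Icc 0 1 →
      IntegrableOn (fun q : ℝ × ℝ => graphonOfGraph (grf ω) q.1 q.2 - W q.1 q.2) s := fun hs =>
    (intOn_bdd _ (graphon_meas _) 1 (fun q => graphon_abs _ _ _) hs).sub (W_intOn hW hs)
  rw [block_sum hn _ hS hT hS1 hT1 (hGWi (Set.prod_mono hS1 hT1))]
  set s : Fin n → ℝ := fun i => n * (volume : Measure ℝ).real (S ∩ Iv n i) with hs
  set t : Fin n → ℝ := fun i => n * (volume : Measure ℝ).real (T ∩ Iv n i) with ht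
  have hst : ∀ (R : Set ℝ) (i : Fin n),
      n * (volume : Measure ℝ).real (R ∩ Iv n i) ∈ Set.Icc (0:ℝ) 1 := by
    intro R i
    refine ⟨by positivity, ?_⟩
    have h1 : (volume : Measure ℝ).real (R ∩ Iv n i) ≤ (volume : Measure ℝ).real (Iv n i) :=
      measureReal_mono Set.inter_subset_right (by simp [Iv])
    rw [Iv_vol, le_div_iff₀ hn'] at h1
    linarith
  have hblk : ∀ i j : Fin n, ∫ q in (S ∩ Iv n i) ×ˢ (T ∩ Iv n j),
        (graphonOfGraph (grf ω) q.1 q.2 - W q.1 q.2)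
      = 1 / (n:ℝ)^2 * (X i j * s i * t j)
        + 1 / (n:ℝ)^2 * ((if i = j then - pavg n W i j else 0) * s i * t j)
        + ∫ q in (S ∩ Iv n i) ×ˢ (T ∩ Iv n j), (pavg n W i j - W q.1 q.2) := by
    intro i j
    have hC : (S ∩ Iv n i) ×ˢ (T ∩ Iv n j) ⊆ Set.Icc (0:ℝ) 1 ×ˢ Set.Icc (0:ℝ) 1 :=
      (hsub i j).trans (blk_sub i j)
    have hCm : MeasurableSet ((S ∩ Iv n i) ×ˢ (T ∩ Iv n j)) :=
      (hS.inter (Iv_meas i)).prod (hT.inter (Iv_meas j))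
    have hconst : ∀ a : ℝ, IntegrableOn (fun _ : ℝ × ℝ => a) ((S ∩ Iv n i) ×ˢ (T ∩ Iv n j)) :=
      fun a => intOn_bdd _ measurable_const |a| (fun _ => le_rfl) hC
    have hvol : (volume : Measure (ℝ × ℝ)).real ((S ∩ Iv n i) ×ˢ (T ∩ Iv n j))
        = 1 / (n:ℝ)^2 * (s i * t j) := by
      rw [Measure.volume_eq_prod, measureReal_prod_prod]
      simp only [hs, ht]
      field_simp
    have e : ∫ q in (S ∩ Iv n i) ×ˢ (T ∩ Iv n j),
        (graphonOfGraph (grf ω) q.1 q.2 - W q.1 q.2)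
        = ∫ q in (S ∩ Iv n i) ×ˢ (T ∩ Iv n j),
          ((X i j + (if i = j then - pavg n W i j else 0)) + (pavg n W i j - W q.1 q.2)) := by
      apply setIntegral_congr_fun hCm
      intro q hq
      have hq' := hsub i j hq
      simp only
      rw [graphon_blk (grf ω) i j hq'.1 hq'.2, hX, ← adj_sub hW ω i j]
      ring
    have hsubi : IntegrableOn (fun q : ℝ × ℝ => pavg n W i j - W q.1 q.2)
        ((S ∩ Iv n i) ×ˢ (T ∩ Iv n j)) := (hconst _).sub (W_intOn hW hC)
    rw [e, integral_add (hconst _) hsubi, setIntegral_const, hvol,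
      smul_eq_mul]
    ring
  simp only [hblk, Finset.sum_add_distrib]
  have b1 : |∑ i, ∑ j, 1 / (n:ℝ)^2 * (X i j * s i * t j)| ≤ η := by
    simp only [← Finset.mul_sum]
    rw [abs_mul, abs_of_pos hn2, one_div, ← div_eq_inv_mul, div_le_iff₀ (by positivity)]
    rw [← pow_le_pow_iff_left₀ (abs_nonneg _) (by positivity) (four_ne_zero), Even.pow_abs (by decide)]
    refine (bilin_bound X s t (hst S) (hst T)).trans ?_
    calc _ ≤ (n:ℝ)^4 * (η ^ 4 * (n:ℝ) ^ 4) := by gcongr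
      _ = _ := by ring
  have b2 : |∑ i, ∑ j, 1 / (n:ℝ)^2 * ((if i = j then - pavg n W i j else 0) * s i * t j)|
      ≤ 1 / (n:ℝ) := by
    have : ∑ i, ∑ j, 1 / (n:ℝ)^2 * ((if i = j then - pavg n W i j else 0) * s i * t j)
        = ∑ i, 1 / (n:ℝ)^2 * (- pavg n W i i * s i * t i) := by
      simp
    rw [this]
    refine (Finset.abs_sum_le_sum_abs _ _).trans ?_
    calc _ ≤ ∑ i : Fin n, (1 / (n:ℝ)^2 : ℝ) := by
          refine Finset.sum_le_sum fun i _ => ?_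
          rw [abs_mul, abs_of_pos hn2]
          apply mul_le_of_le_one_right hn2.le
          rw [abs_mul, abs_mul, abs_neg, abs_of_nonneg (pavg_mem hW i i).1,
            abs_of_nonneg (hst S i).1, abs_of_nonneg (hst T i).1]
          exact mul_le_one₀ (mul_le_one₀ (pavg_mem hW i i).2 (hst S i).1 (hst S i).2)
            (hst T i).1 (hst T i).2
      _ = 1 / (n:ℝ) := by
          simp
          field_simp
  have b3 : |∑ i, ∑ j, ∫ q in (S ∩ Iv n i) ×ˢ (T ∩ Iv n j), (pavg n W i j - W q.1 q.2)|
      ≤ L1err n W := by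
    refine (Finset.abs_sum_le_sum_abs _ _).trans (Finset.sum_le_sum fun i _ => ?_)
    refine (Finset.abs_sum_le_sum_abs _ _).trans (Finset.sum_le_sum fun j _ => ?_)
    refine abs_integral_le_integral_abs.trans ?_
    apply setIntegral_mono_set
    · exact (((intOn_bdd _ measurable_const |pavg n W i j| (fun _ => le_rfl) (blk_sub i j)).sub
        (W_intOn hW (blk_sub i j)))).abs
    · exact Filter.Eventually.of_forall fun q => abs_nonneg _
    · exact (hsub i j).eventuallyLE
  refine (abs_add_le _ _).trans (add_le_add ((abs_add_le _ _).trans (add_le_add b1 b2)) b3)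

lemma main_bound {n : ℕ} (hn : 2 ≤ n) (hW : IsGraphon W) {δ : ℝ} (hδ : 0 < δ)
    (h1 : 1 / (n:ℝ) ≤ δ / 4) (h2 : L1err n W ≤ δ / 4) :
    (n:ℝ)^2 * graphonEnt W - n ≤ 2 * (1 + Real.logb 2 (NhatCut n δ W : ℝ)
      + 3 / ((δ/4)^4 * n) * choose2 n) := by
  classical
  have hn0 : 0 < n := by omega
  have hn' : (0:ℝ) < n := by exact_mod_cast hn0
  set P := pavg n W with hP
  set A : Finset (EdgeT n → Bool) := Finset.univ.filter fun ω =>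
    ∑ j, ∑ k, (∑ i, XB P ω i j * XB P ω i k) ^ 2 ≤ (δ/4) ^ 4 * (n:ℝ) ^ 4 with hA
  have hcard : A.card ≤ NhatCut n δ W := by
    unfold NhatCut
    have hmem : ∀ ω : A, dCut (graphonOfGraph (grf ω.1)) W ≤ δ := by
      intro ω
      have hω := (Finset.mem_filter.1 ω.2).2
      have := cut_bound hn0 hW ω.1 (η := δ/4) (by positivity) hω
      linarith
    have := Nat.card_le_card_of_injective
      (fun ω : A => (⟨grf ω.1, hmem ω⟩ :
        {G : SimpleGraph (Fin n) // dCut (graphonOfGraph G) W ≤ δ}))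
      (fun ω ω' h => Subtype.ext (grf_inj (Subtype.mk.inj h)))
    simpa using this
  have hlog : Real.logb 2 (A.card : ℝ) ≤ Real.logb 2 (NhatCut n δ W : ℝ) := by
    rcases Nat.eq_zero_or_pos A.card with h | h
    · rw [h]
      simp
      rcases Nat.eq_zero_or_pos (NhatCut n δ W) with h' | h'
      · simp [h']
      · exact Real.logb_nonneg (by norm_num) (by exact_mod_cast h')
    · exact Real.logb_le_logb_of_le (by norm_num) (by exact_mod_cast h) (by exact_mod_cast hcard)
  have hg := gibbs (p := fun e : EdgeT n => P e.1.1 e.1.2) (fun e => pavg_mem hW _ _) A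
  have hm := markov4 (P := P) (pavg_mem hW) ((δ/4) ^ 4 * (n:ℝ) ^ 4) (by positivity) A (by
    intro ω hω
    simp only [hA, Finset.mem_filter, Finset.mem_univ, true_and, not_le] at hω
    exact hω.le)
  rw [card_edge] at hg
  have hc0 : 0 ≤ choose2 n := by
    rw [← card_edge]
    positivity
  have hm2 : 3 * (n:ℝ)^3 / ((δ/4) ^ 4 * (n:ℝ) ^ 4) = 3 / ((δ/4)^4 * n) := by
    field_simp
  rw [hm2] at hm
  have hm3 := mul_le_mul_of_nonneg_right hm hc0
  have hs := edge_sum (fun i j => binEnt (P i j)) (fun i j => by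
    simp only [hP]; rw [pavg_symm hW])
  have he := ent_le hW hn0
  have hd : ∑ i : Fin n, binEnt (P i i) ≤ n := by
    refine (Finset.sum_le_sum fun i _ => binEnt_le_one _).trans ?_
    simp
  linarith

lemma Nhat_le (n : ℕ) (δ : ℝ) : Real.logb 2 (NhatCut n δ W : ℝ) ≤ choose2 n := by
  classical
  have h : NhatCut n δ W ≤ 2 ^ (Fintype.card (EdgeT n)) := by
    unfold NhatCut
    have : Nat.card (EdgeT n → Bool) = 2 ^ (Fintype.card (EdgeT n)) := by simp
    rw [← this]
    apply Nat.card_le_card_of_injective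
      (fun G e => decide (G.1.Adj e.1.1 e.1.2))
    intro G G' h
    apply Subtype.ext
    have key : ∀ i j : Fin n, i < j → (G.1.Adj i j ↔ G'.1.Adj i j) := by
      intro i j hij
      have := congrFun h ⟨(i, j), hij⟩
      simpa using this
    ext i j
    rcases lt_trichotomy i j with hl | hl | hl
    · exact key i j hl
    · subst hl; simp
    · rw [G.1.adj_comm, G'.1.adj_comm]
      exact key j i hl
  rcases Nat.eq_zero_or_pos (NhatCut n δ W) with h' | h'
  · rw [h', ← card_edge]; simp
  · rw [← card_edge]
    calc _ ≤ Real.logb 2 ((2:ℝ) ^ (Fintype.card (EdgeT n))) :=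
          Real.logb_le_logb_of_le (by norm_num) (by exact_mod_cast h') (by exact_mod_cast h)
      _ = _ := by
          rw [Real.logb_pow, Real.logb_self_eq_one (by norm_num), mul_one]

lemma ent_nonneg (hW : IsGraphon W) : 0 ≤ graphonEnt W :=
  integral_nonneg fun _ => integral_nonneg fun _ => binEnt_nonneg (hW.2.2 _ _)

end Approx
/-- Lemma 4.4: `liminf_n log₂ N̂_□(n,δ;W) / C(n,2) ≥ Ent(W)`. -/
theorem stmt5 (W : ℝ → ℝ → ℝ) (hW : IsGraphon W) (δ : ℝ) (hδ : 0 < δ) :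
    graphonEnt W ≤
      Filter.liminf (fun n : ℕ => Real.logb 2 (NhatCut n δ W : ℝ) / choose2 n)
        Filter.atTop := by
  have hcp : ∀ {n : ℕ}, 2 ≤ n → 0 < choose2 n := by
    intro n hn
    have : (2:ℝ) ≤ n := by exact_mod_cast hn
    unfold choose2
    have : (0:ℝ) < n * (n - 1) := mul_pos (by linarith) (by linarith)
    linarith
  have hub : Filter.IsBoundedUnder (· ≤ ·) Filter.atTop
      (fun n : ℕ => Real.logb 2 (NhatCut n δ W : ℝ) / choose2 n) := by
    refine ⟨1, ?_⟩
    rw [Filter.eventually_map]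
    filter_upwards [Filter.eventually_ge_atTop 2] with n hn
    rw [div_le_one (hcp hn)]
    exact Nhat_le n δ
  refine le_of_forall_pos_sub_le fun ε hε => ?_
  refine Filter.le_liminf_of_le hub.isCoboundedUnder_ge ?_
  have hlim : Filter.Tendsto (fun n : ℕ => (4 + 3 / (δ/4)^4) * (1 / (n:ℝ))) Filter.atTop (nhds 0) := by
    have := (tendsto_one_div_atTop_nhds_zero_nat (𝕜 := ℝ)).const_mul (4 + 3 / (δ/4)^4)
    simpa using this
  have hlim1 := tendsto_one_div_atTop_nhds_zero_nat (𝕜 := ℝ)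
  filter_upwards [Filter.eventually_ge_atTop 2, L1_small hW (show 0 < δ/4 by positivity),
    hlim.eventually_le_const hε, hlim1.eventually_le_const (show 0 < δ/4 by positivity)]
    with n hn hL he h1
  have hb := main_bound hn hW hδ h1 hL
  have hc := hcp hn
  rw [le_div_iff₀ hc]
  have hn2 : (2:ℝ) ≤ n := by exact_mod_cast hn
  have hn0 : (0:ℝ) < n := by linarith
  have hE := ent_nonneg hW
  have e1 : 3 / ((δ/4)^4 * n) = 3 / (δ/4)^4 * (1 / (n:ℝ)) := by
    field_simp
  rw [e1] at hb
  -- the error terms are at most `ε` times the number of pairs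
  have e2 : (n:ℝ)/2 + 1 ≤ 4 * (1 / (n:ℝ)) * choose2 n := by
    unfold choose2
    have : 4 * (1 / (n:ℝ)) * ((n:ℝ) * ((n:ℝ) - 1) / 2) = 2 * (n - 1) := by
      field_simp
      ring
    rw [this]
    linarith
  have e3 : graphonEnt W * choose2 n ≤ (n:ℝ)^2 * graphonEnt W / 2 := by
    unfold choose2
    nlinarith
  have e4 := mul_le_mul_of_nonneg_right he hc.le
  nlinarith

end
end
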